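/- arXiv:1810.00877 — 8 statements merged into one kernel-verified Lean document; each statement's English description precedes it below -/
import Mathlib

section
/- Let 0 < δ < 1/2, ε > 0, Δ > 0, and let f be the truncated Laplacian density with parameters λ = Δ/ε, A = (Δ/ε)·log(1 + (e^ε − 1)/(2δ)), B = 1/(2λ(1 − e^{−A/λ})). Then the probability mass of the interval [A − Δ, A] is exactly δ, i.e., ∫_{A−Δ}^{A} f(x) dx = δ. -/
open MeasureTheory Real

/-!
On `[0, A]` the density is a multiple of `e ^ (-x / λ)`, so the mass of `[A - d, A]` is
`(e ^ (-(A - d) / λ) - e ^ (-A / λ)) / (2 * (1 - e ^ (-A / λ)))`. Multiplying numerator and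
denominator by `e ^ (A / λ)` turns this into `(e ^ (d / λ) - 1) / (2 * (e ^ (A / λ) - 1))`.
For `d = Δ` the numerator is `e ^ ε - 1`, and `A` is chosen to make the denominator
`(e ^ ε - 1) / δ`.
-/

theorem integral_exp_neg_div {c : ℝ} (hc : c ≠ 0) (a b : ℝ) :
    ∫ x in a..b, exp (-x / c) = c * (exp (-a / c) - exp (-b / c)) := by
  calc ∫ x in a..b, exp (-x / c)
      = ∫ x in -b..-a, exp (x / c) :=
        intervalIntegral.integral_comp_neg fun x => exp (x / c)
    _ = c * (exp (-a / c) - exp (-b / c)) := by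
        rw [intervalIntegral.integral_comp_div _ hc, integral_exp, smul_eq_mul]

theorem le_log_one_add_exp_sub_one_div {ε t : ℝ} (hε : 0 ≤ ε) (ht0 : 0 < t) (ht1 : t ≤ 1) :
    ε ≤ log (1 + (exp ε - 1) / t) := by
  have hexp : 0 ≤ exp ε - 1 := sub_nonneg.mpr (one_le_exp hε)
  have hdiv : exp ε - 1 ≤ (exp ε - 1) / t := le_div_self hexp ht0 ht1
  rw [le_log_iff_exp_le (by linarith)]
  linarith

/-- The density of the Laplace distribution with scale `lam`, conditioned on `[-A, A]`. It is meant
for `0 < lam` and `0 < A`, when the leading factor makes its total mass `1`. -/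
noncomputable def truncatedLaplacianPDF (lam A x : ℝ) : ℝ :=
  if x ∈ Set.Icc (-A) A then 1 / (2 * lam * (1 - exp (-A / lam))) * exp (-|x| / lam) else 0

namespace truncatedLaplacianPDF

variable {lam A : ℝ}

theorem eq_of_mem_Icc {x : ℝ} (hx : x ∈ Set.Icc 0 A) :
    truncatedLaplacianPDF lam A x = 1 / (2 * lam * (1 - exp (-A / lam))) * exp (-x / lam) := by
  have hmem : x ∈ Set.Icc (-A) A := ⟨by linarith [hx.1, hx.2], hx.2⟩
  rw [truncatedLaplacianPDF, if_pos hmem, abs_of_nonneg hx.1]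

theorem integral_of_mem_Icc (hlam : lam ≠ 0) {a b : ℝ}
    (ha : a ∈ Set.Icc 0 A) (hb : b ∈ Set.Icc 0 A) :
    ∫ x in a..b, truncatedLaplacianPDF lam A x =
      (exp (-a / lam) - exp (-b / lam)) / (2 * (1 - exp (-A / lam))) := by
  calc ∫ x in a..b, truncatedLaplacianPDF lam A x
      = ∫ x in a..b, 1 / (2 * lam * (1 - exp (-A / lam))) * exp (-x / lam) :=
        intervalIntegral.integral_congr fun x hx =>
          eq_of_mem_Icc (Set.uIcc_subset_Icc ha hb hx)
    _ = 1 / (2 * lam * (1 - exp (-A / lam))) * (lam * (exp (-a / lam) - exp (-b / lam))) := by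
        rw [intervalIntegral.integral_const_mul, integral_exp_neg_div hlam]
    _ = (exp (-a / lam) - exp (-b / lam)) / (2 * (1 - exp (-A / lam))) := by
        field_simp

theorem integral_sub_right_endpoint (hlam : lam ≠ 0) {d : ℝ} (hd : d ∈ Set.Icc 0 A) :
    ∫ x in (A - d)..A, truncatedLaplacianPDF lam A x =
      (exp (d / lam) - 1) / (2 * (exp (A / lam) - 1)) := by
  have hleft : A - d ∈ Set.Icc 0 A := ⟨sub_nonneg.mpr hd.2, sub_le_self A hd.1⟩
  have hright : A ∈ Set.Icc 0 A := ⟨hd.1.trans hd.2, le_rfl⟩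
  have hshift : exp (-(A - d) / lam) = exp (d / lam) / exp (A / lam) := by
    rw [← exp_sub]
    ring_nf
  have hneg : exp (-A / lam) = 1 / exp (A / lam) := by
    rw [neg_div, exp_neg, one_div]
  rw [integral_of_mem_Icc hlam hleft hright, hshift, hneg]
  have hpos := exp_ne_zero (A / lam)
  field_simp

end truncatedLaplacianPDF

/-- For the truncated Laplacian density, the probability mass of the
interval `[A − Δ, A]` is exactly `δ`: `∫_{A−Δ}^{A} f(x) dx = δ`. -/
theorem truncatedLaplacian_tail_mass
    (ε δ Δ lam A B : ℝ) (f : ℝ → ℝ)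
    (hδ0 : 0 < δ) (hδ : δ < 1 / 2) (hε : 0 < ε) (hΔ : 0 < Δ)
    (hlam : lam = Δ / ε)
    (hA : A = (Δ / ε) * Real.log (1 + (Real.exp ε - 1) / (2 * δ)))
    (hB : B = 1 / (2 * lam * (1 - Real.exp (-A / lam))))
    (hf : ∀ x : ℝ, f x = if x ∈ Set.Icc (-A) A then B * Real.exp (-|x| / lam) else 0) :
    ∫ x in (A - Δ)..A, f x = δ := by
  have hlam_pos : 0 < lam := hlam ▸ div_pos hΔ hε
  have hexp_pos : 0 < exp ε - 1 := sub_pos.mpr (one_lt_exp_iff.mpr hε)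
  have hΔ_div : Δ / lam = ε := by rw [hlam, div_div_cancel₀ hΔ.ne']
  have hA_div : A / lam = log (1 + (exp ε - 1) / (2 * δ)) := by
    rw [hA, ← hlam, mul_div_cancel_left₀ _ hlam_pos.ne']
  have hexpA : exp (A / lam) = 1 + (exp ε - 1) / (2 * δ) := by
    rw [hA_div, exp_log (by positivity)]
  have hΔA : Δ ≤ A := by
    rw [← div_le_div_iff_of_pos_right hlam_pos, hΔ_div, hA_div]
    exact le_log_one_add_exp_sub_one_div hε.le (by linarith) (by linarith)
  have hf_eq : f = truncatedLaplacianPDF lam A := by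
    funext x
    rw [hf, hB, truncatedLaplacianPDF]
  calc ∫ x in (A - Δ)..A, f x
      = (exp (Δ / lam) - 1) / (2 * (exp (A / lam) - 1)) := by
        rw [hf_eq, truncatedLaplacianPDF.integral_sub_right_endpoint hlam_pos.ne' ⟨hΔ.le, hΔA⟩]
    _ = (exp ε - 1) / (2 * ((exp ε - 1) / (2 * δ))) := by
        rw [hΔ_div, hexpA, add_sub_cancel_left]
    _ = δ := by
        field_simp
end

section
/- Let 0 < δ < 1/2, ε > 0, Δ > 0, and let P_TLap be the Borel probability measure on ℝ with density f(x) = B·e^{−|x|/λ} for x ∈ [−A, A] and f(x) = 0 otherwise, where λ = Δ/ε, A = (Δ/ε)·log(1 + (e^ε − 1)/(2δ)), B = 1/(2λ(1 − e^{−A/λ})). Then P_TLap satisfies the (ε,δ)-differential-privacy constraint with sensitivity Δ: for every real d with |d| ≤ Δ and every Borel set S ⊆ ℝ, P_TLap(S) ≤ e^ε · P_TLap(S + d) + δ. -/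
open MeasureTheory Real

/-- A Borel probability measure `P` on ℝ satisfies the (ε,δ)-differential-privacy
constraint with sensitivity `Δ` if for every `d` with `|d| ≤ Δ` and every Borel set `S`,
`P(S) ≤ e^ε · P(S + d) + δ`, where `S + d = {s + d : s ∈ S}`. -/
def SatisfiesDP (ε δ Δ : ℝ) (P : Measure ℝ) : Prop :=
  ∀ d : ℝ, |d| ≤ Δ → ∀ S : Set ℝ, MeasurableSet S →
    P S ≤ ENNReal.ofReal (Real.exp ε) * P ((fun s => s + d) '' S) + ENNReal.ofReal δ

/-!
The density `f` satisfies `f x ≤ e^ε f (x + d)` wherever `x + d` stays in `[-A, A]`, because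
`|x + d| ≤ |x| + Δ`. By symmetry one may take `0 ≤ d ≤ Δ`, and then the only points at which this
bound fails lie in `(A - d, A]`. Since `f x ≤ B e^{-x/λ}` on the whole line, this interval has mass
at most `B λ (e^ε - 1) e^{-A/λ}`, whether or not it reaches below `0`, and `A` and `B` are chosen
so that this number is `δ`.
-/

section Measure

open scoped ENNReal

variable {G : Type*} [MeasurableSpace G] [AddGroup G] {μ : Measure G} {g : G → ℝ≥0∞}

theorem withDensity_le_mul_image_add_right_add [MeasurableAdd G] [μ.IsAddRightInvariant]
    {c : ℝ≥0∞} (hc : c ≠ ∞) (d : G) {T : Set G} (hT : MeasurableSet T)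
    (hg : ∀ x ∉ T, g x ≤ c * g (x + d)) {S : Set G} (hS : MeasurableSet S) :
    μ.withDensity g S ≤ c * μ.withDensity g ((fun s => s + d) '' S) + μ.withDensity g T := by
  have shift_emb := measurableEmbedding_addRight d
  have off_T : μ.withDensity g (S \ T) ≤ c * μ.withDensity g ((fun s => s + d) '' S) := by
    rw [withDensity_apply _ (hS.diff hT),
      withDensity_apply _ (shift_emb.measurableSet_image.mpr hS),
      ← (measurePreserving_add_right μ d).setLIntegral_comp_emb shift_emb]
    calc ∫⁻ x in S \ T, g x ∂μ
        ≤ ∫⁻ x in S \ T, c * g (x + d) ∂μ :=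
          setLIntegral_mono' (hS.diff hT) fun x hx => hg x hx.2
      _ ≤ ∫⁻ x in S, c * g (x + d) ∂μ := lintegral_mono_set Set.sdiff_subset
      _ = c * ∫⁻ x in S, g (x + d) ∂μ := lintegral_const_mul' c _ hc
  calc μ.withDensity g S
      ≤ μ.withDensity g (S \ T ∪ T) := measure_mono (by simp)
    _ ≤ μ.withDensity g (S \ T) + μ.withDensity g T := measure_union_le _ _
    _ ≤ _ := by gcongr

theorem isNegInvariant_withDensity [MeasurableNeg G] [μ.IsNegInvariant]
    (hg : Function.Even g) : (μ.withDensity g).IsNegInvariant where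
  neg_eq_self := by
    ext s hs
    rw [Measure.neg_apply, withDensity_apply _ hs.neg, withDensity_apply _ hs]
    calc ∫⁻ x in -s, g x ∂μ
        = ∫⁻ x in Neg.neg ⁻¹' s, g (-x) ∂μ := by simp only [hg _, Set.neg_preimage]
      _ = ∫⁻ x in s, g x ∂μ := (Measure.measurePreserving_neg μ).setLIntegral_comp_preimage_emb
          (MeasurableEquiv.neg G).measurableEmbedding g s

end Measure

theorem SatisfiesDP.of_nonneg_shift {ε δ Δ : ℝ} {P : Measure ℝ} [P.IsNegInvariant]
    (h : ∀ d : ℝ, 0 ≤ d → d ≤ Δ → ∀ S : Set ℝ, MeasurableSet S →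
      P S ≤ ENNReal.ofReal (exp ε) * P ((fun s => s + d) '' S) + ENNReal.ofReal δ) :
    SatisfiesDP ε δ Δ P := by
  intro d hd S hS
  obtain hd0 | hd0 := le_total 0 d
  · exact h d hd0 ((le_abs_self d).trans hd) S hS
  · have reflected : (fun s => s + -d) '' (-S) = -((fun s => s + d) '' S) := by
      ext x
      simp [add_comm]
    simpa only [reflected, Measure.measure_neg] using
      h (-d) (neg_nonneg.mpr hd0) ((neg_le_abs d).trans hd) (-S) hS.neg

theorem exp_neg_norm_div_le_exp_mul {E : Type*} [SeminormedAddGroup E] {lam ε : ℝ} (hlam : 0 < lam)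
    (x : E) {d : E} (hd : ‖d‖ ≤ lam * ε) :
    exp (-‖x‖ / lam) ≤ exp ε * exp (-‖x + d‖ / lam) := by
  rw [← exp_add, exp_le_exp, div_le_iff₀ hlam, add_mul, div_mul_cancel₀ _ hlam.ne']
  linarith [norm_add_le x d]

theorem setLIntegral_Ioc_exp_neg_div {lam a b : ℝ} (hlam : lam ≠ 0) (hab : a ≤ b) :
    ∫⁻ x in Set.Ioc a b, ENNReal.ofReal (exp (-x / lam)) =
      ENNReal.ofReal (lam * (exp (-a / lam) - exp (-b / lam))) := by
  have hcont : Continuous fun x : ℝ => exp (-x / lam) := by fun_prop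
  rw [← ofReal_integral_eq_lintegral_ofReal hcont.integrableOn_Ioc
      (.of_forall fun x => (exp_pos _).le),
    ← intervalIntegral.integral_of_le hab,
    intervalIntegral.integral_comp_neg fun x => exp (x / lam),
    intervalIntegral.integral_comp_div _ hlam, integral_exp, smul_eq_mul]

/-- The density `f` of the truncated Laplacian, at scale `lam` on the support `[-A, A]`. The height
`B` is a free parameter here, so the total mass need not be `1`. -/
noncomputable def truncatedLaplacePDF (lam A B : ℝ) : ℝ → ℝ :=
  (Set.Icc (-A) A).indicator fun x => B * exp (-|x| / lam)

/-- The measure `P_TLap` with density `truncatedLaplacePDF lam A B`; it is a probability measure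
only for the normalizing value of `B`. -/
noncomputable def truncatedLaplace (lam A B : ℝ) : Measure ℝ :=
  volume.withDensity fun x => ENNReal.ofReal (truncatedLaplacePDF lam A B x)

section TruncatedLaplace

variable {lam A B : ℝ}

theorem even_truncatedLaplacePDF : Function.Even (truncatedLaplacePDF lam A B) := by
  intro x
  have mem_iff : -x ∈ Set.Icc (-A) A ↔ x ∈ Set.Icc (-A) A := by
    simp only [Set.mem_Icc, ← abs_le, abs_neg]
  simp only [truncatedLaplacePDF, Set.indicator_apply, mem_iff, abs_neg]

instance isNegInvariant_truncatedLaplace : (truncatedLaplace lam A B).IsNegInvariant :=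
  isNegInvariant_withDensity fun x => congrArg ENNReal.ofReal (even_truncatedLaplacePDF x)

theorem truncatedLaplacePDF_nonneg (hB : 0 ≤ B) (x : ℝ) : 0 ≤ truncatedLaplacePDF lam A B x :=
  Set.indicator_nonneg (fun _ _ => by positivity) x

theorem truncatedLaplacePDF_le_exp_neg_div (hlam : 0 ≤ lam) (hB : 0 ≤ B) (x : ℝ) :
    truncatedLaplacePDF lam A B x ≤ B * exp (-x / lam) := by
  refine Set.indicator_apply_le' (fun _ => ?_) fun _ => by positivity
  gcongr
  exact le_abs_self x

theorem truncatedLaplacePDF_le_exp_mul_add {ε d x : ℝ} (hlam : 0 < lam) (hB : 0 ≤ B)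
    (hd0 : 0 ≤ d) (hd : d ≤ lam * ε) (hx : x ∉ Set.Ioc (A - d) A) :
    truncatedLaplacePDF lam A B x ≤ exp ε * truncatedLaplacePDF lam A B (x + d) := by
  by_cases hxA : x ∈ Set.Icc (-A) A
  · have hx_le : x ≤ A - d := not_lt.mp fun h => hx ⟨h, hxA.2⟩
    have hxdA : x + d ∈ Set.Icc (-A) A := ⟨by linarith [hxA.1], by linarith⟩
    rw [truncatedLaplacePDF, Set.indicator_of_mem hxA, Set.indicator_of_mem hxdA, mul_left_comm]
    gcongr
    exact exp_neg_norm_div_le_exp_mul hlam x ((abs_of_nonneg hd0).trans_le hd)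
  · rw [truncatedLaplacePDF, Set.indicator_of_notMem hxA]
    exact mul_nonneg (exp_pos ε).le (truncatedLaplacePDF_nonneg hB _)

theorem truncatedLaplace_Ioc_le {a b : ℝ} (hlam : 0 < lam) (hB : 0 ≤ B) (hab : a ≤ b) :
    truncatedLaplace lam A B (Set.Ioc a b) ≤
      ENNReal.ofReal (B * lam * (exp (-a / lam) - exp (-b / lam))) := by
  calc truncatedLaplace lam A B (Set.Ioc a b)
      = ∫⁻ x in Set.Ioc a b, ENNReal.ofReal (truncatedLaplacePDF lam A B x) :=
        withDensity_apply _ measurableSet_Ioc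
    _ ≤ ∫⁻ x in Set.Ioc a b, ENNReal.ofReal B * ENNReal.ofReal (exp (-x / lam)) := by
        simp_rw [← ENNReal.ofReal_mul hB]
        gcongr with x
        exact truncatedLaplacePDF_le_exp_neg_div hlam.le hB x
    _ = ENNReal.ofReal (B * lam * (exp (-a / lam) - exp (-b / lam))) := by
        rw [lintegral_const_mul' _ _ ENNReal.ofReal_ne_top,
          setLIntegral_Ioc_exp_neg_div hlam.ne' hab, ← ENNReal.ofReal_mul hB, mul_assoc]

theorem satisfiesDP_truncatedLaplace {ε δ Δ : ℝ} (hlam : 0 < lam) (hB : 0 ≤ B)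
    (hΔ : Δ ≤ lam * ε) (hδ : B * lam * ((exp ε - 1) * exp (-A / lam)) ≤ δ) :
    SatisfiesDP ε δ Δ (truncatedLaplace lam A B) := by
  refine .of_nonneg_shift fun d hd0 hdΔ S hS => ?_
  have hd : d ≤ lam * ε := hdΔ.trans hΔ
  have density_le : ∀ x ∉ Set.Ioc (A - d) A, ENNReal.ofReal (truncatedLaplacePDF lam A B x) ≤
      ENNReal.ofReal (exp ε) * ENNReal.ofReal (truncatedLaplacePDF lam A B (x + d)) := by
    intro x hx
    rw [← ENNReal.ofReal_mul (exp_pos ε).le]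
    exact ENNReal.ofReal_le_ofReal (truncatedLaplacePDF_le_exp_mul_add hlam hB hd0 hd hx)
  have exp_le : exp (-(A - d) / lam) ≤ exp ε * exp (-A / lam) := by
    rw [← exp_add, exp_le_exp, div_le_iff₀ hlam, add_mul, div_mul_cancel₀ _ hlam.ne']
    linarith
  have tail_le : truncatedLaplace lam A B (Set.Ioc (A - d) A) ≤ ENNReal.ofReal δ := by
    refine (truncatedLaplace_Ioc_le hlam hB (by linarith)).trans (ENNReal.ofReal_le_ofReal ?_)
    refine le_trans ?_ hδ
    gcongr
    linarith
  exact (withDensity_le_mul_image_add_right_add ENNReal.ofReal_ne_top d measurableSet_Ioc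
    density_le hS).trans (add_le_add_right tail_le _)

end TruncatedLaplace

/-- The constant `B` for which `truncatedLaplacePDF lam A B` integrates to `1`. -/
noncomputable def truncatedLaplaceHeight (lam A : ℝ) : ℝ :=
  1 / (2 * lam * (1 - exp (-A / lam)))

theorem truncatedLaplaceHeight_nonneg {lam A : ℝ} (hlam : 0 ≤ lam) (hA : 0 ≤ A) :
    0 ≤ truncatedLaplaceHeight lam A := by
  have hexp : 0 ≤ 1 - exp (-A / lam) :=
    sub_nonneg.mpr <| exp_le_one_iff.mpr <| div_nonpos_of_nonpos_of_nonneg (neg_nonpos.mpr hA) hlam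
  unfold truncatedLaplaceHeight
  positivity

theorem truncatedLaplaceHeight_mul_exp_neg_div {lam A : ℝ} (hlam : lam ≠ 0) (hA : A ≠ 0) :
    truncatedLaplaceHeight lam A * lam * exp (-A / lam) = 1 / (2 * (exp (A / lam) - 1)) := by
  have hexp : exp (A / lam) - 1 ≠ 0 := sub_ne_zero.mpr (by simp [hlam, hA])
  rw [truncatedLaplaceHeight, neg_div, exp_neg]
  field_simp

theorem satisfiesDP_truncatedLaplace_height {ε δ Δ lam A : ℝ} (hlam : 0 < lam) (hA : 0 < A)
    (hΔ : Δ ≤ lam * ε) (hδ : (exp ε - 1) / (2 * (exp (A / lam) - 1)) ≤ δ) :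
    SatisfiesDP ε δ Δ (truncatedLaplace lam A (truncatedLaplaceHeight lam A)) := by
  refine satisfiesDP_truncatedLaplace hlam (truncatedLaplaceHeight_nonneg hlam.le hA.le) hΔ ?_
  rwa [mul_left_comm, truncatedLaplaceHeight_mul_exp_neg_div hlam.ne' hA.ne', mul_one_div]

theorem truncatedLaplacian_satisfiesDP_general
    (ε δ Δ lam A B : ℝ) (f : ℝ → ℝ) (P : Measure ℝ)
    (hδ0 : 0 < δ) (hε : 0 < ε) (hΔ : 0 < Δ)
    (hlam : lam = Δ / ε)
    (hA : A = (Δ / ε) * Real.log (1 + (Real.exp ε - 1) / (2 * δ)))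
    (hB : B = 1 / (2 * lam * (1 - Real.exp (-A / lam))))
    (hf : ∀ x : ℝ, f x = if x ∈ Set.Icc (-A) A then B * Real.exp (-|x| / lam) else 0)
    (hP : P = volume.withDensity (fun x => ENNReal.ofReal (f x))) :
    SatisfiesDP ε δ Δ P := by
  have hf_eq : f = truncatedLaplacePDF lam A (truncatedLaplaceHeight lam A) := by
    ext x
    rw [hf, hB, truncatedLaplacePDF, Set.indicator_apply, truncatedLaplaceHeight]
  have hlam_pos : 0 < lam := hlam ▸ div_pos hΔ hε
  have hexpε : 0 < exp ε - 1 := sub_pos.mpr (one_lt_exp_iff.mpr hε)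
  have hlog_arg : 1 < 1 + (exp ε - 1) / (2 * δ) := lt_add_of_pos_right 1 (by positivity)
  rw [← hlam] at hA
  have hA_pos : 0 < A := hA ▸ mul_pos hlam_pos (log_pos hlog_arg)
  have hexpA : exp (A / lam) = 1 + (exp ε - 1) / (2 * δ) := by
    rw [hA, mul_div_cancel_left₀ _ hlam_pos.ne', exp_log (one_pos.trans hlog_arg)]
  rw [hP, hf_eq]
  refine satisfiesDP_truncatedLaplace_height hlam_pos hA_pos ?_ (le_of_eq ?_)
  · rw [hlam, div_mul_cancel₀ _ hε.ne']
  · rw [hexpA, add_sub_cancel_left]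
    field_simp

/-- The truncated Laplacian mechanism preserves
(ε,δ)-differential privacy. -/
theorem truncatedLaplacian_satisfiesDP
    (ε δ Δ lam A B : ℝ) (f : ℝ → ℝ) (P : Measure ℝ)
    (hδ0 : 0 < δ) (hδ : δ < 1 / 2) (hε : 0 < ε) (hΔ : 0 < Δ)
    (hlam : lam = Δ / ε)
    (hA : A = (Δ / ε) * Real.log (1 + (Real.exp ε - 1) / (2 * δ)))
    (hB : B = 1 / (2 * lam * (1 - Real.exp (-A / lam))))
    (hf : ∀ x : ℝ, f x = if x ∈ Set.Icc (-A) A then B * Real.exp (-|x| / lam) else 0)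
    (hP : P = volume.withDensity (fun x => ENNReal.ofReal (f x))) :
    SatisfiesDP ε δ Δ P :=
  truncatedLaplacian_satisfiesDP_general ε δ Δ lam A B f P hδ0 hε hΔ hlam hA hB hf hP
end

section
/- Let 0 < δ < 1/2, ε > 0, Δ > 0, and let f be the truncated Laplacian density with parameters λ = Δ/ε, A = (Δ/ε)·log(1 + (e^ε − 1)/(2δ)), B = 1/(2λ(1 − e^{−A/λ})). Then the expected noise amplitude satisfies the exact identity ∫_ℝ |x|·f(x) dx = (Δ/ε)·(1 − log(1 + (e^ε − 1)/(2δ)) / ((e^ε − 1)/(2δ))). -/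
open MeasureTheory Real

/-!
The density is even, so the amplitude is twice the integral of `x * (B * exp (-x / lam))` over
`[0, A]`. This integral is elementary, and the value of the normalising constant `B` turns it into
`lam - A / (exp (A / lam) - 1)`. The cut-off `A` is chosen so that
`exp (A / lam) - 1 = (exp ε - 1) / (2 * δ)`.
-/

/-- The density of the Laplace distribution with scale `lam`, truncated to `[-A, A]` and normalised.
For `lam < 0` the formula still describes a density, with its mode at the two endpoints. -/
noncomputable def truncatedLaplacianPDFReal (lam A x : ℝ) : ℝ :=
  if x ∈ Set.Icc (-A) A then 1 / (2 * lam * (1 - exp (-A / lam))) * exp (-|x| / lam) else 0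

theorem setIntegral_Icc_neg_comp_abs {a : ℝ} (ha : 0 ≤ a) (g : ℝ → ℝ) :
    ∫ x in Set.Icc (-a) a, g |x| = 2 * ∫ x in (0 : ℝ)..a, g x := by
  have h_even : (Set.Icc (-a) a).indicator (fun x ↦ g |x|) =
      fun x ↦ (Set.Iic a).indicator g |x| := by
    funext x
    simp only [Set.indicator, Set.mem_Icc, Set.mem_Iic, abs_le]
  rw [← integral_indicator measurableSet_Icc, h_even, integral_comp_abs,
    setIntegral_indicator measurableSet_Iic, Set.Ioi_inter_Iic,
    ← intervalIntegral.integral_of_le ha]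

theorem hasDerivAt_mul_sub_one_mul_exp_mul_div_sq {c : ℝ} (hc : c ≠ 0) (x : ℝ) :
    HasDerivAt (fun y ↦ (c * y - 1) * exp (c * y) / c ^ 2) (x * exp (c * x)) x := by
  have h_lin : HasDerivAt (fun y ↦ c * y) c x := hasDerivAt_const_mul c
  refine (((h_lin.sub_const 1).mul h_lin.exp).div_const (c ^ 2)).congr_deriv ?_
  field_simp
  ring

theorem integral_mul_exp_mul {c : ℝ} (hc : c ≠ 0) (a b : ℝ) :
    ∫ x in a..b, x * exp (c * x) =
      (c * b - 1) * exp (c * b) / c ^ 2 - (c * a - 1) * exp (c * a) / c ^ 2 :=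
  intervalIntegral.integral_eq_sub_of_hasDerivAt
    (fun x _ ↦ hasDerivAt_mul_sub_one_mul_exp_mul_div_sq hc x)
    (Continuous.intervalIntegrable (by fun_prop) a b)

theorem integral_mul_exp_neg_div {lam : ℝ} (hlam : lam ≠ 0) (a : ℝ) :
    ∫ x in (0 : ℝ)..a, x * exp (-x / lam) = lam ^ 2 - lam * (a + lam) * exp (-a / lam) := by
  have h_rate (x : ℝ) : -x / lam = -lam⁻¹ * x := by ring
  simp only [h_rate]
  rw [integral_mul_exp_mul (neg_ne_zero.mpr (inv_ne_zero hlam)), mul_zero, exp_zero]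
  field_simp
  ring

theorem integral_abs_mul_truncatedLaplacianPDFReal {lam A : ℝ} (hlam : lam ≠ 0) (hA : 0 < A) :
    ∫ x, |x| * truncatedLaplacianPDFReal lam A x = lam - A / (exp (A / lam) - 1) := by
  set B := 1 / (2 * lam * (1 - exp (-A / lam))) with hB
  have h_indicator : (fun x ↦ |x| * truncatedLaplacianPDFReal lam A x) =
      (Set.Icc (-A) A).indicator (fun x ↦ B * (|x| * exp (-|x| / lam))) := by
    funext x
    simp only [truncatedLaplacianPDFReal, Set.indicator, mul_ite, mul_zero, mul_left_comm, hB]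
  have h_exp : exp (A / lam) - 1 ≠ 0 :=
    sub_ne_zero.mpr ((exp_eq_one_iff _).not.mpr (div_ne_zero hA.ne' hlam))
  calc ∫ x, |x| * truncatedLaplacianPDFReal lam A x
      = ∫ x in Set.Icc (-A) A, B * (|x| * exp (-|x| / lam)) := by
        rw [h_indicator, integral_indicator measurableSet_Icc]
    _ = B * (2 * ∫ x in (0 : ℝ)..A, x * exp (-x / lam)) := by
        rw [integral_const_mul, setIntegral_Icc_neg_comp_abs hA.le fun x ↦ x * exp (-x / lam)]
    _ = B * (2 * (lam ^ 2 - lam * (A + lam) * exp (-A / lam))) := by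
        rw [integral_mul_exp_neg_div hlam]
    _ = lam - A / (exp (A / lam) - 1) := by
        rw [hB, neg_div, exp_neg]
        field_simp
        ring

theorem truncatedLaplacian_noise_amplitude_general {lam t A B : ℝ} {f : ℝ → ℝ}
    (ht : -1 < t) (hA0 : 0 < A) (hA : A = lam * log (1 + t))
    (hB : B = 1 / (2 * lam * (1 - exp (-A / lam))))
    (hf : ∀ x, f x = if x ∈ Set.Icc (-A) A then B * exp (-|x| / lam) else 0) :
    ∫ x, |x| * f x = lam * (1 - log (1 + t) / t) := by
  have hlam : lam ≠ 0 := left_ne_zero_of_mul (hA ▸ hA0.ne')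
  obtain rfl : f = truncatedLaplacianPDFReal lam A := by
    funext x
    rw [hf, hB, truncatedLaplacianPDFReal]
  have h_exp : exp (A / lam) - 1 = t := by
    rw [hA, mul_div_cancel_left₀ _ hlam, exp_log (by linarith), add_sub_cancel_left]
  rw [integral_abs_mul_truncatedLaplacianPDFReal hlam hA0, h_exp, hA]
  ring

/-- The expected noise amplitude of the truncated Laplacian density:
`∫ |x| f(x) dx = (Δ/ε)(1 − log(1 + (e^ε − 1)/(2δ)) / ((e^ε − 1)/(2δ)))`. -/
theorem truncatedLaplacian_noise_amplitude
    (ε δ Δ lam A B : ℝ) (f : ℝ → ℝ)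
    (hδ0 : 0 < δ) (hδ : δ < 1 / 2) (hε : 0 < ε) (hΔ : 0 < Δ)
    (hlam : lam = Δ / ε)
    (hA : A = (Δ / ε) * Real.log (1 + (Real.exp ε - 1) / (2 * δ)))
    (hB : B = 1 / (2 * lam * (1 - Real.exp (-A / lam))))
    (hf : ∀ x : ℝ, f x = if x ∈ Set.Icc (-A) A then B * Real.exp (-|x| / lam) else 0) :
    ∫ x : ℝ, |x| * f x
      = (Δ / ε) * (1 - Real.log (1 + (Real.exp ε - 1) / (2 * δ))
          / ((Real.exp ε - 1) / (2 * δ))) := by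
  subst hlam
  have ht : 0 < (exp ε - 1) / (2 * δ) := div_pos (by simpa using hε) (by positivity)
  have hA0 : 0 < A := hA ▸ mul_pos (div_pos hΔ hε) (log_pos (by linarith))
  exact truncatedLaplacian_noise_amplitude_general (by linarith) hA0 hA hB hf
end

section
/- Let 0 < δ < 1/2, ε > 0, Δ > 0, and let f be the truncated Laplacian density with parameters λ = Δ/ε, A = (Δ/ε)·log(1 + (e^ε − 1)/(2δ)), B = 1/(2λ(1 − e^{−A/λ})). Then the expected noise power satisfies the exact identity ∫_ℝ x²·f(x) dx = (2Δ²/ε²)·(1 − ((1/2)·log²(1 + (e^ε − 1)/(2δ)) + log(1 + (e^ε − 1)/(2δ))) / ((e^ε − 1)/(2δ))). -/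
open MeasureTheory Real

/-!
In units of the scale `lam`, the `n`-th absolute moment is the quotient of the incomplete gamma
integrals `∫ u in 0..t, u ^ n * exp (-u)` and `∫ u in 0..t, exp (-u)`, where `t = A / lam`. For
`n = 2`, multiplying both by `exp t` gives `2 * lam ^ 2 * (1 - (t ^ 2 / 2 + t) / (exp t - 1))`, and
the threshold of the mechanism is chosen so that `exp t - 1 = (exp ε - 1) / (2 * δ)`.
-/

theorem integral_pow_succ_mul_exp_neg (n : ℕ) (t : ℝ) :
    ∫ u in (0 : ℝ)..t, u ^ (n + 1) * exp (-u) =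
      (n + 1) * (∫ u in (0 : ℝ)..t, u ^ n * exp (-u)) - t ^ (n + 1) * exp (-t) := by
  have hpow (u : ℝ) : HasDerivAt (fun u : ℝ ↦ u ^ (n + 1)) ((n + 1) * u ^ n) u := by
    simpa using hasDerivAt_pow (n + 1) u
  have hexp (u : ℝ) : HasDerivAt (fun u : ℝ ↦ -exp (-u)) (exp (-u)) u := by
    simpa using (hasDerivAt_neg u).exp.fun_neg
  have hparts := intervalIntegral.integral_mul_deriv_eq_deriv_mul (a := 0) (b := t)
    (fun u _ ↦ hpow u) (fun u _ ↦ hexp u)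
    (Continuous.intervalIntegrable (by fun_prop) _ _)
    (Continuous.intervalIntegrable (by fun_prop) _ _)
  simp only [mul_neg, intervalIntegral.integral_neg, mul_assoc,
    intervalIntegral.integral_const_mul] at hparts
  rw [hparts, zero_pow n.succ_ne_zero]
  ring

theorem integral_pow_mul_exp_neg (n : ℕ) (t : ℝ) :
    ∫ u in (0 : ℝ)..t, u ^ n * exp (-u) =
      n.factorial * (1 - exp (-t) * ∑ k ∈ Finset.range (n + 1), t ^ k / k.factorial) := by
  induction n with
  | zero => simp
  | succ n ih =>
    rw [integral_pow_succ_mul_exp_neg, ih, Finset.sum_range_succ _ (n + 1), Nat.factorial_succ]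
    push_cast
    field_simp
    ring

theorem integral_pow_mul_exp_neg_div (n : ℕ) (a : ℝ) {c : ℝ} (hc : c ≠ 0) :
    ∫ x in (0 : ℝ)..a, x ^ n * exp (-x / c) =
      c ^ (n + 1) * ∫ u in (0 : ℝ)..a / c, u ^ n * exp (-u) := by
  have hscale (x : ℝ) : x ^ n * exp (-x / c) = c ^ n * ((x / c) ^ n * exp (-(x / c))) := by
    rw [div_pow, neg_div]
    field_simp
  simp only [hscale, intervalIntegral.integral_const_mul]
  rw [intervalIntegral.integral_comp_div (fun u ↦ u ^ n * exp (-u)) hc, zero_div, smul_eq_mul,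
    pow_succ, mul_assoc]

theorem integral_ite_mem_Icc_comp_abs (g : ℝ → ℝ) {a : ℝ} (ha : 0 ≤ a) :
    ∫ x, (if x ∈ Set.Icc (-a) a then g |x| else 0) = 2 * ∫ x in (0 : ℝ)..a, g x := by
  calc ∫ x, (if x ∈ Set.Icc (-a) a then g |x| else 0)
      = ∫ x, (Set.Iic a).indicator g |x| := by
        simp only [Set.indicator_apply, Set.mem_Icc, Set.mem_Iic, abs_le]
    _ = 2 * ∫ x in Set.Ioi 0, (Set.Iic a).indicator g x := integral_comp_abs
    _ = 2 * ∫ x in (0 : ℝ)..a, g x := by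
        rw [setIntegral_indicator measurableSet_Iic, Set.Ioi_inter_Iic,
          intervalIntegral.integral_of_le ha]

namespace truncatedLaplacianPDF

variable {lam A : ℝ}

theorem integral_abs_pow_mul (n : ℕ) (hlam : lam ≠ 0) (hA : 0 ≤ A) :
    ∫ x, |x| ^ n * truncatedLaplacianPDF lam A x =
      n.factorial * lam ^ n *
        (1 - exp (-(A / lam)) * ∑ k ∈ Finset.range (n + 1), (A / lam) ^ k / k.factorial) /
        (1 - exp (-(A / lam))) := by
  set B := 1 / (2 * lam * (1 - exp (-A / lam))) with hB
  calc ∫ x, |x| ^ n * truncatedLaplacianPDF lam A x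
      = ∫ x, if x ∈ Set.Icc (-A) A then B * (|x| ^ n * exp (-|x| / lam)) else 0 := by
        simp only [truncatedLaplacianPDF, ← hB, mul_ite, mul_zero, mul_left_comm]
    _ = 2 * ∫ x in (0 : ℝ)..A, B * (x ^ n * exp (-x / lam)) :=
        integral_ite_mem_Icc_comp_abs (fun x ↦ B * (x ^ n * exp (-x / lam))) hA
    _ = 2 * B * lam ^ (n + 1) * ∫ u in (0 : ℝ)..A / lam, u ^ n * exp (-u) := by
        rw [intervalIntegral.integral_const_mul, integral_pow_mul_exp_neg_div n A hlam]
        ring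
    _ = _ := by
        rw [integral_pow_mul_exp_neg, hB, neg_div]
        field_simp
        ring

theorem integral_sq_mul (hlam : lam ≠ 0) (hA : 0 < A) :
    ∫ x, x ^ 2 * truncatedLaplacianPDF lam A x =
      2 * lam ^ 2 * (1 - (1 / 2 * (A / lam) ^ 2 + A / lam) / (exp (A / lam) - 1)) := by
  have hexp : exp (A / lam) - 1 ≠ 0 :=
    sub_ne_zero.mpr ((exp_eq_one_iff _).not.mpr (div_ne_zero hA.ne' hlam))
  have hmoment := integral_abs_pow_mul 2 hlam hA.le
  simp only [sq_abs] at hmoment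
  rw [hmoment, exp_neg]
  generalize A / lam = t at *
  simp only [Finset.sum_range_succ, Finset.range_zero, Finset.sum_empty, Nat.factorial]
  push_cast
  field_simp
  ring

end truncatedLaplacianPDF

theorem truncatedLaplacian_noise_power_general {ε δ Δ : ℝ} (hδ : 0 < δ) (hε : 0 < ε) (hΔ : 0 < Δ) :
    ∫ x, x ^ 2 * truncatedLaplacianPDF (Δ / ε) (Δ / ε * log (1 + (exp ε - 1) / (2 * δ))) x =
      2 * Δ ^ 2 / ε ^ 2 * (1 -
        (1 / 2 * log (1 + (exp ε - 1) / (2 * δ)) ^ 2 + log (1 + (exp ε - 1) / (2 * δ))) /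
          ((exp ε - 1) / (2 * δ))) := by
  have hratio : 0 < (exp ε - 1) / (2 * δ) :=
    div_pos (sub_pos.mpr (one_lt_exp_iff.mpr hε)) (by positivity)
  have hscale : 0 < Δ / ε := div_pos hΔ hε
  have hlog : 0 < log (1 + (exp ε - 1) / (2 * δ)) := log_pos (lt_add_of_pos_right 1 hratio)
  rw [truncatedLaplacianPDF.integral_sq_mul hscale.ne' (mul_pos hscale hlog),
    mul_div_cancel_left₀ _ hscale.ne', exp_log (by positivity), add_sub_cancel_left, div_pow,
    mul_div_assoc]

/-- The expected noise power of the truncated Laplacian density: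
`∫ x² f(x) dx = (2Δ²/ε²)(1 − ((1/2)log²(1 + (e^ε−1)/(2δ)) + log(1 + (e^ε−1)/(2δ)))
  / ((e^ε−1)/(2δ)))`. -/
theorem truncatedLaplacian_noise_power
    (ε δ Δ lam A B : ℝ) (f : ℝ → ℝ)
    (hδ0 : 0 < δ) (hδ : δ < 1 / 2) (hε : 0 < ε) (hΔ : 0 < Δ)
    (hlam : lam = Δ / ε)
    (hA : A = (Δ / ε) * Real.log (1 + (Real.exp ε - 1) / (2 * δ)))
    (hB : B = 1 / (2 * lam * (1 - Real.exp (-A / lam))))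
    (hf : ∀ x : ℝ, f x = if x ∈ Set.Icc (-A) A then B * Real.exp (-|x| / lam) else 0) :
    ∫ x : ℝ, x ^ 2 * f x
      = (2 * Δ ^ 2 / ε ^ 2) * (1 -
          ((1 / 2) * (Real.log (1 + (Real.exp ε - 1) / (2 * δ))) ^ 2
            + Real.log (1 + (Real.exp ε - 1) / (2 * δ)))
          / ((Real.exp ε - 1) / (2 * δ))) := by
  have hpdf : f = truncatedLaplacianPDF lam A :=
    funext fun x ↦ by rw [hf, hB, truncatedLaplacianPDF]
  rw [hpdf, hA, hlam, truncatedLaplacian_noise_power_general hδ0 hε hΔ]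
end

section
/- Let ε > 0, δ ≥ 0, Δ > 0, and let P be a Borel probability measure on ℝ satisfying the (ε,δ)-differential-privacy constraint with sensitivity Δ: for every real d with |d| ≤ Δ and every Borel set S ⊆ ℝ, P(S) ≤ e^ε·P(S + d) + δ. Let N be a positive integer and define the discrete probability mass function p on ℤ by p(i) = P([Δ(2i−1)/(2N), Δ(2i+1)/(2N))). Then p satisfies the discrete (ε,δ)-differential-privacy constraint with sensitivity N: for every S ⊆ ℤ and every integer d with |d| ≤ N, Σ_{i∈S} p(i) − e^ε·Σ_{i∈S} p(i + d) ≤ δ. -/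
open MeasureTheory Real

/-! The bins are disjoint, so the continuous constraint on a union of bins is a constraint on sums
of bin masses. Translating by `d` bin widths carries bin `i` onto bin `i + d`, and for `|d| ≤ N` and
bins of width `Δ / N` this is a translation by at most `Δ`. -/

open scoped Function

theorem SatisfiesDP.tsum_measure_le {ε δ Δ : ℝ} {P : Measure ℝ} (hP : SatisfiesDP ε δ Δ P)
    {ι : Type*} [Countable ι] {A : ι → Set ℝ} (hA : ∀ i, MeasurableSet (A i))
    (hdisj : Pairwise (Disjoint on A)) {c : ℝ} (hc : |c| ≤ Δ) :
    ∑' i, P (A i) ≤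
      ENNReal.ofReal (exp ε) * ∑' i, P ((fun s => s + c) '' A i) + ENNReal.ofReal δ := by
  have himage_meas (i : ι) : MeasurableSet ((fun s => s + c) '' A i) :=
    (measurableEmbedding_addRight c).measurableSet_image.mpr (hA i)
  have himage_disj : Pairwise (Disjoint on fun i => (fun s => s + c) '' A i) :=
    fun i j hij => (Set.disjoint_image_iff (add_left_injective c)).mpr (hdisj hij)
  rw [← measure_iUnion hdisj hA, ← measure_iUnion himage_disj himage_meas, ← Set.image_iUnion]
  exact hP c hc _ (.iUnion hA)

/-- The `i`-th cell of the grid of half-open intervals of width `w` whose `0`-th cell starts at `a`;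
these are the bins of a discretization. All cells are empty unless `0 < w`. -/
def gridCell {α : Type*} [AddCommGroup α] [Preorder α] (a w : α) (i : ℤ) : Set α :=
  Set.Ico (a + i • w) (a + (i + 1) • w)

section GridCell

variable {α : Type*} [AddCommGroup α] [PartialOrder α] [IsOrderedAddMonoid α]

theorem pairwise_disjoint_gridCell (a w : α) : Pairwise (Disjoint on gridCell a w) :=
  Set.pairwise_disjoint_Ico_add_zsmul a w

theorem image_add_zsmul_gridCell (a w : α) (d i : ℤ) :
    (fun s => s + d • w) '' gridCell a w i = gridCell a w (i + d) := by
  simp only [gridCell, Set.image_add_const_Ico, add_assoc, ← add_zsmul, add_comm 1 d]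

end GridCell

theorem Ico_centered_eq_gridCell {𝕜 : Type*} [Field 𝕜] [CharZero 𝕜] [Preorder 𝕜] (Δ n : 𝕜) (i : ℤ) :
    Set.Ico (Δ * (2 * (i : 𝕜) - 1) / (2 * n)) (Δ * (2 * (i : 𝕜) + 1) / (2 * n)) =
      gridCell (-(Δ / (2 * n))) (Δ / n) i := by
  simp only [gridCell, zsmul_eq_mul]
  push_cast
  congr 1 <;> ring

theorem abs_zsmul_div_natCast_le {𝕜 : Type*} [Field 𝕜] [LinearOrder 𝕜] [IsStrictOrderedRing 𝕜]
    {Δ : 𝕜} (hΔ : 0 ≤ Δ) {d : ℤ} {n : ℕ} (hd : |d| ≤ (n : ℤ)) :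
    |d • (Δ / (n : 𝕜))| ≤ Δ := by
  have hd' : |(d : 𝕜)| ≤ n := by exact_mod_cast hd
  calc |d • (Δ / (n : 𝕜))| = Δ * (|(d : 𝕜)| / n) := by
        rw [zsmul_eq_mul, abs_mul, abs_div, abs_of_nonneg hΔ, Nat.abs_cast]
        ring
    _ ≤ Δ := mul_le_of_le_one_right hΔ (div_le_one_of_le₀ hd' n.cast_nonneg)

theorem discretization_preserves_dp_general {ε δ Δ : ℝ} {P : Measure ℝ} (hP : SatisfiesDP ε δ Δ P)
    (a w : ℝ) (S : Set ℤ) {d : ℤ} (hd : |d • w| ≤ Δ) :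
    ∑' i : S, P (gridCell a w i) ≤
      ENNReal.ofReal (exp ε) * ∑' i : S, P (gridCell a w (i + d)) + ENNReal.ofReal δ := by
  simpa only [image_add_zsmul_gridCell] using
    hP.tsum_measure_le (A := fun i : S => gridCell a w i) (fun _ => measurableSet_Ico)
      ((pairwise_disjoint_gridCell a w).comp_of_injective Subtype.val_injective) hd

/-- Discretizing a continuous (ε,δ)-differentially private noise
distribution with sensitivity `Δ` into bins of width `Δ/N` yields a discrete
probability mass function on ℤ satisfying the discrete (ε,δ)-DP constraint with
sensitivity `N`. -/
theorem discretization_preserves_dp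
    (ε δ Δ : ℝ) (hε : 0 < ε) (hδ : 0 ≤ δ) (hΔ : 0 < Δ)
    (P : Measure ℝ) [IsProbabilityMeasure P]
    (hP : SatisfiesDP ε δ Δ P)
    (N : ℕ) (hN : 0 < N)
    (p : ℤ → ENNReal)
    (hp : ∀ i : ℤ, p i =
      P (Set.Ico (Δ * (2 * (i : ℝ) - 1) / (2 * N)) (Δ * (2 * (i : ℝ) + 1) / (2 * N)))) :
    ∀ S : Set ℤ, ∀ d : ℤ, |d| ≤ (N : ℤ) →
      (∑' i : S, p i)
        ≤ ENNReal.ofReal (Real.exp ε) * (∑' i : S, p ((i : ℤ) + d))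
          + ENNReal.ofReal δ := by
  intro S d hd
  simpa only [hp, Ico_centered_eq_gridCell] using
    discretization_preserves_dp_general hP _ _ S (abs_zsmul_div_natCast_le hΔ.le hd)
end

section
/- Let ε > 0, δ > 0, Δ > 0, set a = (δ + (e^ε − 1)/2)/e^ε and b = e^{−ε}, and suppose n is a positive integer with Σ_{k=0}^{n−1} a·b^k = 1/2. Then the minimum noise amplitude satisfies the lower bound V_opt^{L1}(ε, δ, Δ) ≥ 2a·Δ·Σ_{k=0}^{n−1} b^k·k = 2a·((b − bⁿ)/(1 − b)² − (n − 1)·bⁿ/(1 − b))·Δ. -/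
open MeasureTheory Real

/-- The minimum noise amplitude: the infimum of `∫ |x| dP(x)` over all Borel
probability measures `P` on ℝ satisfying the (ε,δ)-DP constraint with sensitivity Δ. -/
noncomputable def VoptL1 (ε δ Δ : ℝ) : ENNReal :=
  ⨅ (P : Measure ℝ) (_ : IsProbabilityMeasure P) (_ : SatisfiesDP ε δ Δ P),
    ∫⁻ x : ℝ, ENNReal.ofReal |x| ∂P

/-!
Write `uₖ = P [kΔ, ∞) + P (-∞, -kΔ]`. Shifting the right tail by `Δ` and the left tail by `-Δ`,
the privacy constraint says `uₖ ≤ e^ε uₖ₊₁ + 2δ`, and `u₀ ≥ 1`. The constants `a` and `b` are chosen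
so that `1 - 2 ∑_{j < k} a bʲ` solves this recurrence with equality, so it bounds `uₖ` from below.
Since `|x|` is at least `Δ` times the number of `k ≥ 1` with `kΔ ≤ |x|`, these tail bounds add up to
a bound on `∫ |x| dP`; exchanging the order of the resulting double sum produces `∑ k bᵏ`.
-/

section FiniteSums

open Finset

theorem sum_range_ite_succ_nsmul_le {M : Type*} [AddCommMonoid M] [PartialOrder M]
    [IsOrderedAddMonoid M] [DecidableLE M] {c y : M} (hc : 0 ≤ c) (hy : 0 ≤ y) (n : ℕ) :
    ∑ k ∈ range n, (if (k + 1) • c ≤ y then c else 0) ≤ y := by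
  induction n with
  | zero => simpa using hy
  | succ n ih =>
    by_cases h : (n + 1) • c ≤ y
    · calc ∑ k ∈ range (n + 1), (if (k + 1) • c ≤ y then c else 0)
          ≤ ∑ _k ∈ range (n + 1), c := sum_le_sum fun k _ => by split_ifs <;> simp [hc]
        _ = (n + 1) • c := by simp
        _ ≤ y := h
    · simpa [sum_range_succ, h] using ih

theorem sum_range_sum_range_succ_add_sum_nsmul {M : Type*} [AddCommMonoid M] (c : ℕ → M)
    (n : ℕ) :
    ∑ k ∈ range n, ∑ j ∈ range (k + 1), c j + ∑ k ∈ range n, k • c k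
      = n • ∑ k ∈ range n, c k := by
  induction n with
  | zero => simp
  | succ n ih =>
    simp only [sum_range_succ _ n, add_nsmul, nsmul_add, one_nsmul, ← ih]
    abel

theorem sum_range_pow_mul_natCast {K : Type*} [Field K] {b : K} (hb : b ≠ 1) (n : ℕ) :
    ∑ k ∈ range n, b ^ k * (k : K)
      = (b - b ^ n) / (1 - b) ^ 2 - ((n : K) - 1) * b ^ n / (1 - b) := by
  have h : 1 - b ≠ 0 := sub_ne_zero.mpr hb.symm
  induction n with
  | zero =>
    rw [sum_range_zero, pow_zero, Nat.cast_zero]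
    field_simp
    ring
  | succ n ih =>
    rw [sum_range_succ, ih]
    push_cast
    field_simp
    ring

theorem sub_sum_mul_pow_le_of_recurrence {R : Type*} [CommRing R] [PartialOrder R]
    [IsOrderedRing R] {a b d v : R} {u : ℕ → R} (hb : 0 ≤ b) (hv : v - a = b * (v - d))
    (h_zero : v ≤ u 0) (h_succ : ∀ k, b * (u k - d) ≤ u (k + 1)) (k : ℕ) :
    v - ∑ j ∈ range k, a * b ^ j ≤ u k := by
  induction k with
  | zero => simpa using h_zero
  | succ k ih =>
    have h_shift : ∑ j ∈ range (k + 1), a * b ^ j = b * ∑ j ∈ range k, a * b ^ j + a := by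
      rw [sum_range_succ', mul_sum, pow_zero, mul_one]
      exact congrArg (· + a) (sum_congr rfl fun j _ => by ring)
    calc v - ∑ j ∈ range (k + 1), a * b ^ j
        = b * (v - ∑ j ∈ range k, a * b ^ j - d) := by
          rw [h_shift]
          linear_combination hv
      _ ≤ b * (u k - d) := by gcongr
      _ ≤ u (k + 1) := h_succ k

end FiniteSums

section Tails

open Finset Set
open scoped ENNReal

theorem sum_mul_measure_succ_nsmul_le_lintegral {α : Type*} [MeasurableSpace α] {μ : Measure α}
    {f : α → ℝ≥0∞} (hf : AEMeasurable f μ) (c : ℝ≥0∞) (n : ℕ) :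
    ∑ k ∈ range n, c * μ {x | (k + 1) • c ≤ f x} ≤ ∫⁻ x, f x ∂μ := by
  have h_meas (k : ℕ) : NullMeasurableSet {x | (k + 1) • c ≤ f x} μ :=
    nullMeasurableSet_le aemeasurable_const hf
  calc ∑ k ∈ range n, c * μ {x | (k + 1) • c ≤ f x}
      = ∑ k ∈ range n, ∫⁻ x, {x | (k + 1) • c ≤ f x}.indicator (fun _ => c) x ∂μ :=
        sum_congr rfl fun k _ => (lintegral_indicator_const₀ (h_meas k) c).symm
    _ = ∫⁻ x, ∑ k ∈ range n, {x | (k + 1) • c ≤ f x}.indicator (fun _ => c) x ∂μ :=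
        (lintegral_finsetSum' _ fun k _ => aemeasurable_const.indicator₀ (h_meas k)).symm
    _ ≤ ∫⁻ x, f x ∂μ := lintegral_mono fun x => by
        simpa only [indicator_apply, mem_ofPred_eq] using
          sum_range_ite_succ_nsmul_le zero_le zero_le n

theorem measureReal_le_abs (P : Measure ℝ) [IsFiniteMeasure P] {t : ℝ} (ht : 0 < t) :
    P.real {x | t ≤ |x|} = P.real (Ici t) + P.real (Iic (-t)) := by
  have h_disjoint : Disjoint (Ici t) (Iic (-t)) := Ici_disjoint_Iic.mpr (by linarith)
  rw [← measureReal_union h_disjoint measurableSet_Iic]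
  congr 1
  ext x
  simp [le_abs, le_neg]

end Tails

namespace SatisfiesDP

open Finset Set

variable {ε δ Δ : ℝ} {P : Measure ℝ}

theorem measureReal_le [IsFiniteMeasure P] (hP : SatisfiesDP ε δ Δ P) (hδ : 0 ≤ δ) {d : ℝ}
    (hd : |d| ≤ Δ) {S : Set ℝ} (hS : MeasurableSet S) :
    P.real S ≤ exp ε * P.real ((· + d) '' S) + δ := by
  refine ENNReal.toReal_le_of_le_ofReal (by positivity) ?_
  rw [ENNReal.ofReal_add (by positivity) hδ, ENNReal.ofReal_mul (by positivity),
    ofReal_measureReal]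
  exact hP d hd S hS

theorem tails_le [IsFiniteMeasure P] (hP : SatisfiesDP ε δ Δ P) (hδ : 0 ≤ δ) (hΔ : 0 ≤ Δ)
    (t : ℝ) :
    P.real (Ici t) + P.real (Iic (-t))
      ≤ exp ε * (P.real (Ici (t + Δ)) + P.real (Iic (-(t + Δ)))) + 2 * δ := by
  have h_right : P.real (Ici t) ≤ exp ε * P.real (Ici (t + Δ)) + δ := by
    simpa using hP.measureReal_le hδ (abs_of_nonneg hΔ).le (measurableSet_Ici (a := t))
  have h_left : P.real (Iic (-t)) ≤ exp ε * P.real (Iic (-(t + Δ))) + δ := by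
    rw [neg_add']
    simpa using
      hP.measureReal_le hδ ((abs_neg Δ).trans (abs_of_nonneg hΔ)).le
        (measurableSet_Iic (a := -t))
  linarith

theorem one_sub_sum_le_tails [IsProbabilityMeasure P] (hP : SatisfiesDP ε δ Δ P) (hδ : 0 ≤ δ)
    (hΔ : 0 ≤ Δ) {a b : ℝ} (ha : a = (δ + (exp ε - 1) / 2) / exp ε) (hb : b = exp (-ε)) (k : ℕ) :
    1 - ∑ j ∈ range k, 2 * a * b ^ j ≤ P.real (Ici (k * Δ)) + P.real (Iic (-(k * Δ))) := by
  have hb_mul : b * exp ε = 1 := by rw [hb, ← exp_add, neg_add_cancel, exp_zero]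
  have hb_nonneg : 0 ≤ b := hb ▸ (exp_pos _).le
  have h_init : 1 - 2 * a = b * (1 - 2 * δ) := by
    rw [ha, hb, exp_neg]
    field_simp
    ring
  refine sub_sum_mul_pow_le_of_recurrence
    (u := fun k : ℕ => P.real (Ici (k * Δ)) + P.real (Iic (-(k * Δ)))) hb_nonneg h_init ?_ ?_ k
  · simpa [Iic_union_Ici, add_comm] using measureReal_union_le (μ := P) (Iic 0) (Ici 0)
  · intro k
    have h_step := mul_le_mul_of_nonneg_left (hP.tails_le hδ hΔ (k * Δ)) hb_nonneg
    push_cast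
    rw [add_one_mul]
    linear_combination h_step +
      (P.real (Ici (k * Δ + Δ)) + P.real (Iic (-(k * Δ + Δ)))) * hb_mul

theorem ofReal_sum_one_sub_sum_le_lintegral [IsProbabilityMeasure P] (hP : SatisfiesDP ε δ Δ P)
    (hδ : 0 ≤ δ) (hΔ : 0 < Δ) {a b : ℝ} (ha : a = (δ + (exp ε - 1) / 2) / exp ε)
    (hb : b = exp (-ε)) (n : ℕ) :
    ENNReal.ofReal (∑ k ∈ range n, Δ * (1 - ∑ j ∈ range (k + 1), 2 * a * b ^ j))
      ≤ ∫⁻ x, ENNReal.ofReal |x| ∂P := by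
  have h_tail (k : ℕ) :
      1 - ∑ j ∈ range (k + 1), 2 * a * b ^ j ≤ P.real {x | (k + 1) • Δ ≤ |x|} := by
    rw [measureReal_le_abs P (by positivity), nsmul_eq_mul]
    exact hP.one_sub_sum_le_tails hδ hΔ.le ha hb (k + 1)
  calc ENNReal.ofReal (∑ k ∈ range n, Δ * (1 - ∑ j ∈ range (k + 1), 2 * a * b ^ j))
      ≤ ENNReal.ofReal (∑ k ∈ range n, Δ * P.real {x | (k + 1) • Δ ≤ |x|}) := by
        gcongr with k
        exact h_tail k
    _ = ∑ k ∈ range n, ENNReal.ofReal Δ * P {x | (k + 1) • Δ ≤ |x|} := by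
        rw [ENNReal.ofReal_sum_of_nonneg fun k _ => by positivity]
        exact sum_congr rfl fun k _ => by rw [ENNReal.ofReal_mul hΔ.le, ofReal_measureReal]
    _ = ∑ k ∈ range n,
          ENNReal.ofReal Δ * P {x | (k + 1) • ENNReal.ofReal Δ ≤ ENNReal.ofReal |x|} := by
        simp only [← ENNReal.ofReal_nsmul, ENNReal.ofReal_le_ofReal_iff (abs_nonneg _)]
    _ ≤ ∫⁻ x, ENNReal.ofReal |x| ∂P :=
        sum_mul_measure_succ_nsmul_le_lintegral (by fun_prop) _ n

end SatisfiesDP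

theorem VoptL1_lower_bound_general
    (ε δ Δ : ℝ) (hδ : 0 ≤ δ) (hΔ : 0 < Δ)
    (a b : ℝ)
    (ha : a = (δ + (Real.exp ε - 1) / 2) / Real.exp ε)
    (hb : b = Real.exp (-ε))
    (n : ℕ) :
    ENNReal.ofReal (2 * a * Δ * ∑ k ∈ Finset.range n, b ^ k * (k : ℝ)
        + 2 * Δ * n * (1 / 2 - ∑ k ∈ Finset.range n, a * b ^ k))
      ≤ VoptL1 ε δ Δ := by
  have h_sum : 2 * a * Δ * ∑ k ∈ Finset.range n, b ^ k * (k : ℝ)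
        + 2 * Δ * n * (1 / 2 - ∑ k ∈ Finset.range n, a * b ^ k)
      = ∑ k ∈ Finset.range n, Δ * (1 - ∑ j ∈ Finset.range (k + 1), 2 * a * b ^ j) := by
    have h_swap := sum_range_sum_range_succ_add_sum_nsmul (b ^ ·) n
    simp only [nsmul_eq_mul, mul_comm ((_ : ℕ) : ℝ) (b ^ _)] at h_swap
    simp only [← Finset.mul_sum, Finset.sum_sub_distrib, Finset.sum_const, Finset.card_range,
      nsmul_eq_mul]
    linear_combination 2 * a * Δ * h_swap
  rw [h_sum]
  exact le_iInf fun P => le_iInf fun _ => le_iInf fun hP =>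
    hP.ofReal_sum_one_sub_sum_le_lintegral hδ hΔ ha hb n

/-- Lower bound on the minimum noise amplitude:
`V_opt^{L1}(ε, δ, Δ) ≥ 2aΔ Σ_{k=0}^{n−1} b^k k
  = 2a((b − bⁿ)/(1 − b)² − (n − 1)bⁿ/(1 − b))Δ`. -/
theorem VoptL1_lower_bound
    (ε δ Δ : ℝ) (hε : 0 < ε) (hδ : 0 < δ) (hΔ : 0 < Δ)
    (a b : ℝ)
    (ha : a = (δ + (Real.exp ε - 1) / 2) / Real.exp ε)
    (hb : b = Real.exp (-ε))
    (n : ℕ) (hn : 0 < n)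
    (hhalf : ∑ k ∈ Finset.range n, a * b ^ k = 1 / 2) :
    VoptL1 ε δ Δ
        ≥ ENNReal.ofReal (2 * a * Δ * ∑ k ∈ Finset.range n, b ^ k * (k : ℝ))
      ∧ 2 * a * Δ * ∑ k ∈ Finset.range n, b ^ k * (k : ℝ)
        = 2 * a * ((b - b ^ n) / (1 - b) ^ 2 - ((n : ℝ) - 1) * b ^ n / (1 - b)) * Δ := by
  have hb_ne_one : b ≠ 1 := by simpa [hb] using hε.ne'
  refine ⟨?_, by rw [sum_range_pow_mul_natCast hb_ne_one]; ring⟩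
  simpa [hhalf] using VoptL1_lower_bound_general ε δ Δ hδ.le hΔ a b ha hb n
end

section
/- Fix δ ∈ (0, 1/2) and Δ > 0. Then the minimum noise amplitude satisfies liminf_{ε → 0⁺} V_opt^{L1}(ε, δ, Δ) ≥ (1/(4δ) − 1/2)·Δ; together with the upper bound limsup_{ε → 0⁺} V_opt^{L1}(ε, δ, Δ) ≤ Δ/(4δ), it follows that the ratio of the lower to the upper bound is at least 1 − 2δ in the limit ε → 0. -/
open MeasureTheory Real Filter Topology

/-!
For the upper bound, the uniform distribution on `[-a, a]` with `a = Δ / (2 * δ)` is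
`(0, δ)`-differentially private, because a shift by `d` moves at most `|d| / (2 * a) ≤ δ` of its
mass out of the interval, and its mean absolute value is `a / 2 = Δ / (4 * δ)`.

For the lower bound, a probability has mass at most `1`, so `(ε, δ)`-privacy implies
`(0, δ')`-privacy with `δ' = δ + (exp ε - 1)`. Shifting the two tails outwards by `Δ` then shows
that `P {a ≤ |x|}` drops by at most `2 * δ'` when `a` grows by `Δ`, whence
`P {k * Δ ≤ |x|} ≥ 1 - 2 * k * δ'`. Summing over `1 ≤ k ≤ ⌊1 / (2 * δ')⌋`, the range where these
bounds are nonnegative, gives the amplitude at least `(1 / (4 * δ') - 1 / 2) * Δ`, and `δ' → δ`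
as `ε → 0`.
-/

open scoped ENNReal ProbabilityTheory

lemma sum_range_ite_succ_mul_le (c y : ℝ≥0∞) (n : ℕ) :
    ∑ k ∈ Finset.range n, (if (k + 1) * c ≤ y then c else 0) ≤ y := by
  induction n with
  | zero => simp
  | succ n ih =>
    by_cases hy : (n + 1) * c ≤ y
    · calc ∑ k ∈ Finset.range (n + 1), (if (k + 1) * c ≤ y then c else 0)
          ≤ ∑ _k ∈ Finset.range (n + 1), c :=
            Finset.sum_le_sum fun _ _ => by split_ifs <;> simp
        _ = (n + 1) * c := by simp
        _ ≤ y := hy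
    · simpa [Finset.sum_range_succ, hy] using ih

lemma sum_mul_meas_ge_le_lintegral {Ω : Type*} [MeasurableSpace Ω] {μ : Measure Ω}
    {f : Ω → ℝ≥0∞} (hf : Measurable f) (c : ℝ≥0∞) (n : ℕ) :
    ∑ k ∈ Finset.range n, c * μ {ω | (k + 1) * c ≤ f ω} ≤ ∫⁻ ω, f ω ∂μ := by
  have hmeas (k : ℕ) : MeasurableSet {ω | (k + 1) * c ≤ f ω} :=
    measurableSet_le measurable_const hf
  calc ∑ k ∈ Finset.range n, c * μ {ω | (k + 1) * c ≤ f ω}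
      = ∫⁻ ω, ∑ k ∈ Finset.range n, {ω | (k + 1) * c ≤ f ω}.indicator (fun _ => c) ω ∂μ := by
        rw [lintegral_finsetSum _ fun k _ => measurable_const.indicator (hmeas k)]
        simp only [lintegral_indicator_const (hmeas _)]
    _ ≤ ∫⁻ ω, f ω ∂μ := lintegral_mono fun ω => by
        simpa [Set.indicator_apply] using sum_range_ite_succ_mul_le c (f ω) n

lemma sum_range_one_sub_two_mul (δ : ℝ) (n : ℕ) :
    ∑ k ∈ Finset.range n, (1 - 2 * (k + 1) * δ) = n - δ * n * (n + 1) := by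
  induction n with
  | zero => simp
  | succ n ih =>
    rw [Finset.sum_range_succ, ih]
    push_cast
    ring

lemma one_div_sub_half_le_sum {δ : ℝ} (hδ : 0 < δ) :
    1 / (4 * δ) - 1 / 2 ≤ ∑ k ∈ Finset.range ⌊1 / (2 * δ)⌋₊, (1 - 2 * (k + 1) * δ) := by
  rw [sum_range_one_sub_two_mul]
  set m := 1 / (2 * δ) with hm
  have hfloor : 0 ≤ m - ⌊m⌋₊ := sub_nonneg.2 (Nat.floor_le (by positivity))
  have hceil : 0 ≤ 1 - (m - ⌊m⌋₊) := by linarith [Nat.lt_floor_add_one m]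
  rw [← sub_nonneg]
  calc (0 : ℝ) ≤ δ * ((m - ⌊m⌋₊) * (1 - (m - ⌊m⌋₊))) := by positivity
    _ = ⌊m⌋₊ - δ * ⌊m⌋₊ * (⌊m⌋₊ + 1) - (1 / (4 * δ) - 1 / 2) := by
        generalize (⌊m⌋₊ : ℝ) = n
        rw [hm]
        field_simp
        ring

lemma measure_inter_le_image_add_right {G : Type*} [AddGroup G] [MeasurableSpace G]
    [MeasurableAdd G] (μ : Measure G) [μ.IsAddRightInvariant] (S A : Set G) (d : G) :
    μ (A ∩ S) ≤ μ (A ∩ (· + d) '' S) + μ ((· + d) '' A \ A) := by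
  calc μ (A ∩ S) = μ ((· + d) '' A ∩ (· + d) '' S) := by
        rw [← Set.image_inter (add_left_injective d), Set.image_add_right,
          measure_preimage_add_right]
    _ ≤ μ (A ∩ (· + d) '' S ∪ (· + d) '' A \ A) := by
        gcongr
        tauto_set
    _ ≤ _ := measure_union_le _ _

lemma volume_image_add_right_Icc_diff_le (a b d : ℝ) :
    volume ((· + d) '' Set.Icc a b \ Set.Icc a b) ≤ ENNReal.ofReal |d| := by
  rw [Set.image_add_const_Icc]
  rcases le_total 0 d with hd | hd
  · calc volume (Set.Icc (a + d) (b + d) \ Set.Icc a b) ≤ volume (Set.Ioc b (b + d)) := by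
          gcongr
          rintro x ⟨⟨hax, hxb⟩, hx⟩
          exact ⟨not_le.1 fun h => hx ⟨by linarith, h⟩, hxb⟩
      _ = ENNReal.ofReal |d| := by rw [Real.volume_Ioc, add_sub_cancel_left, abs_of_nonneg hd]
  · calc volume (Set.Icc (a + d) (b + d) \ Set.Icc a b) ≤ volume (Set.Ico (a + d) a) := by
          gcongr
          rintro x ⟨⟨hax, hxb⟩, hx⟩
          exact ⟨hax, not_le.1 fun h => hx ⟨h, by linarith⟩⟩
      _ = ENNReal.ofReal |d| := by rw [Real.volume_Ico, sub_add_cancel_left, abs_of_nonpos hd]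

lemma integral_abs_symm {a : ℝ} (ha : 0 ≤ a) : ∫ x in -a..a, |x| = a ^ 2 := by
  have hint (u v : ℝ) : IntervalIntegrable (fun x : ℝ => |x|) volume u v :=
    continuous_abs.intervalIntegrable u v
  have hpos : ∫ x in (0 : ℝ)..a, |x| = a ^ 2 / 2 := by
    rw [intervalIntegral.integral_congr (g := fun x => x), integral_id]
    · ring
    · intro x hx
      rw [Set.uIcc_of_le ha] at hx
      exact abs_of_nonneg hx.1
  have hneg : ∫ x in -a..0, |x| = a ^ 2 / 2 := by
    simpa [hpos] using (intervalIntegral.integral_comp_neg (a := 0) (b := a) fun x => |x|).symm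
  rw [← intervalIntegral.integral_add_adjacent_intervals (hint (-a) 0) (hint 0 a), hneg, hpos]
  ring

lemma lintegral_abs_cond_Icc {a : ℝ} (ha : 0 < a) :
    ∫⁻ x, ENNReal.ofReal |x| ∂volume[|Set.Icc (-a) a] = ENNReal.ofReal (a / 2) := by
  have hIcc : ∫⁻ x in Set.Icc (-a) a, ENNReal.ofReal |x| = ENNReal.ofReal (a ^ 2) := by
    rw [← ofReal_integral_eq_lintegral_ofReal continuous_abs.integrableOn_Icc
      (Eventually.of_forall abs_nonneg), integral_Icc_eq_integral_Ioc,
      ← intervalIntegral.integral_of_le (by linarith), integral_abs_symm ha.le]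
  rw [ProbabilityTheory.cond, lintegral_smul_measure, hIcc, Real.volume_Icc, smul_eq_mul,
    ← ENNReal.ofReal_inv_of_pos (by linarith), ← ENNReal.ofReal_mul (by bound)]
  congr 1
  field_simp
  ring

namespace SatisfiesDP

variable {ε ε' δ δ' Δ : ℝ} {P : Measure ℝ}

lemma mono (h : SatisfiesDP ε δ Δ P) (hε : ε ≤ ε') (hδ : δ ≤ δ') : SatisfiesDP ε' δ' Δ P :=
  fun d hd S hS => (h d hd S hS).trans (by gcongr)

lemma to_eps_zero [IsProbabilityMeasure P] (h : SatisfiesDP ε δ Δ P) (hε : 0 ≤ ε) (hδ : 0 ≤ δ) :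
    SatisfiesDP 0 (δ + (exp ε - 1)) Δ P := by
  intro d hd S hS
  have hexp : 0 ≤ exp ε - 1 := sub_nonneg.2 (one_le_exp hε)
  set T := (fun s => s + d) '' S
  calc P S ≤ ENNReal.ofReal (exp ε) * P T + ENNReal.ofReal δ := h d hd S hS
    _ = P T + ENNReal.ofReal (exp ε - 1) * P T + ENNReal.ofReal δ := by
        rw [← one_add_mul, ← ENNReal.ofReal_one, ← ENNReal.ofReal_add zero_le_one hexp,
          add_sub_cancel]
    _ ≤ P T + ENNReal.ofReal (exp ε - 1) * 1 + ENNReal.ofReal δ := by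
        gcongr
        exact prob_le_one
    _ = ENNReal.ofReal (exp 0) * P T + ENNReal.ofReal (δ + (exp ε - 1)) := by
        rw [ENNReal.ofReal_add hδ hexp, exp_zero, ENNReal.ofReal_one]
        ring

lemma meas_le_abs_le (h : SatisfiesDP ε δ Δ P) (hΔ : 0 < Δ) {a : ℝ} (ha : 0 ≤ a) :
    P {x | a ≤ |x|} ≤
      ENNReal.ofReal (exp ε) * P {x | a + Δ ≤ |x|} + 2 * ENNReal.ofReal δ := by
  have habs (b : ℝ) : {x : ℝ | b ≤ |x|} = Set.Ici b ∪ Set.Iic (-b) := by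
    ext x
    simp [le_abs, le_neg]
  have hright := h Δ (abs_of_pos hΔ).le (Set.Ici a) measurableSet_Ici
  have hleft := h (-Δ) (by rw [abs_neg, abs_of_pos hΔ]) (Set.Iic (-a)) measurableSet_Iic
  rw [Set.image_add_const_Ici] at hright
  rw [Set.image_add_const_Iic, ← neg_add] at hleft
  have hdisj : Disjoint (Set.Ici (a + Δ)) (Set.Iic (-(a + Δ))) :=
    Set.Ici_disjoint_Iic.2 (by linarith)
  rw [habs, habs, measure_union hdisj measurableSet_Iic]
  calc P (Set.Ici a ∪ Set.Iic (-a)) ≤ P (Set.Ici a) + P (Set.Iic (-a)) := measure_union_le _ _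
    _ ≤ _ := add_le_add hright hleft
    _ = _ := by ring

lemma one_sub_le_meas_le_abs [IsProbabilityMeasure P] (h : SatisfiesDP 0 δ Δ P) (hδ : 0 ≤ δ)
    (hΔ : 0 < Δ) (k : ℕ) : ENNReal.ofReal (1 - 2 * k * δ) ≤ P {x | k * Δ ≤ |x|} := by
  induction k with
  | zero => simp
  | succ k ih =>
    have hstep := h.meas_le_abs_le hΔ (a := k * Δ) (by positivity)
    rw [exp_zero, ENNReal.ofReal_one, one_mul] at hstep
    calc ENNReal.ofReal (1 - 2 * (k + 1 : ℕ) * δ)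
        = ENNReal.ofReal (1 - 2 * k * δ) - 2 * ENNReal.ofReal δ := by
          rw [← ENNReal.ofReal_ofNat 2, ← ENNReal.ofReal_mul zero_le_two,
            ← ENNReal.ofReal_sub _ (by positivity)]
          push_cast
          ring_nf
      _ ≤ P {x | k * Δ + Δ ≤ |x|} := tsub_le_iff_right.2 (ih.trans hstep)
      _ = P {x | (k + 1 : ℕ) * Δ ≤ |x|} := by
          push_cast
          simp only [add_one_mul]

lemma sum_le_lintegral_abs [IsProbabilityMeasure P] (h : SatisfiesDP 0 δ Δ P) (hδ : 0 ≤ δ)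
    (hΔ : 0 < Δ) (n : ℕ) :
    ∑ k ∈ Finset.range n, ENNReal.ofReal (Δ * (1 - 2 * (k + 1) * δ))
      ≤ ∫⁻ x, ENNReal.ofReal |x| ∂P := by
  refine le_trans (Finset.sum_le_sum fun k _ => ?_)
    (sum_mul_meas_ge_le_lintegral (by fun_prop) (ENNReal.ofReal Δ) n)
  rw [ENNReal.ofReal_mul hΔ.le]
  gcongr
  have hlevel : {x : ℝ | (k + 1 : ℝ≥0∞) * ENNReal.ofReal Δ ≤ ENNReal.ofReal |x|}
      = {x | (k + 1 : ℕ) * Δ ≤ |x|} := by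
    ext x
    rw [Set.mem_ofPred_eq, Set.mem_ofPred_eq, ← ENNReal.ofReal_le_ofReal_iff (abs_nonneg x),
      ENNReal.ofReal_mul (by positivity), ENNReal.ofReal_natCast]
    push_cast
    rfl
  rw [hlevel]
  exact_mod_cast h.one_sub_le_meas_le_abs hδ hΔ (k + 1)

lemma le_lintegral_abs [IsProbabilityMeasure P] (h : SatisfiesDP 0 δ Δ P) (hδ : 0 < δ)
    (hΔ : 0 < Δ) :
    ENNReal.ofReal ((1 / (4 * δ) - 1 / 2) * Δ) ≤ ∫⁻ x, ENNReal.ofReal |x| ∂P := by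
  set n := ⌊1 / (2 * δ)⌋₊
  calc ENNReal.ofReal ((1 / (4 * δ) - 1 / 2) * Δ)
      ≤ ENNReal.ofReal (∑ k ∈ Finset.range n, Δ * (1 - 2 * (k + 1) * δ)) := by
        rw [← Finset.mul_sum, mul_comm Δ]
        gcongr
        exact one_div_sub_half_le_sum hδ
    _ ≤ ∑ k ∈ Finset.range n, ENNReal.ofReal (Δ * (1 - 2 * (k + 1) * δ)) :=
        Finset.le_sum_of_subadditive _ ENNReal.ofReal_zero.le
          (fun _ _ => ENNReal.ofReal_add_le) _ _
    _ ≤ ∫⁻ x, ENNReal.ofReal |x| ∂P := h.sum_le_lintegral_abs hδ.le hΔ n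

end SatisfiesDP

lemma satisfiesDP_cond_Icc {a : ℝ} (ha : 0 < a) (Δ : ℝ) :
    SatisfiesDP 0 (Δ / (2 * a)) Δ volume[|Set.Icc (-a) a] := by
  intro d hd S _
  have hvol : volume (Set.Icc (-a) a) = ENNReal.ofReal (2 * a) := by
    rw [Real.volume_Icc, sub_neg_eq_add, two_mul]
  rw [ProbabilityTheory.cond_apply measurableSet_Icc,
    ProbabilityTheory.cond_apply measurableSet_Icc, exp_zero, ENNReal.ofReal_one, one_mul,
    ENNReal.ofReal_div_of_pos (by positivity), hvol, ENNReal.div_eq_inv_mul, ← mul_add]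
  gcongr
  calc volume (Set.Icc (-a) a ∩ S)
      ≤ volume (Set.Icc (-a) a ∩ (· + d) '' S)
          + volume ((· + d) '' Set.Icc (-a) a \ Set.Icc (-a) a) :=
        measure_inter_le_image_add_right volume S _ d
    _ ≤ volume (Set.Icc (-a) a ∩ (· + d) '' S) + ENNReal.ofReal Δ := by
        gcongr
        exact (volume_image_add_right_Icc_diff_le _ _ d).trans (ENNReal.ofReal_le_ofReal hd)

section VoptL1

variable {ε δ Δ : ℝ}

lemma le_VoptL1 (hε : 0 ≤ ε) (hδ : 0 < δ) (hΔ : 0 < Δ) :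
    ENNReal.ofReal ((1 / (4 * (δ + (exp ε - 1))) - 1 / 2) * Δ) ≤ VoptL1 ε δ Δ :=
  le_iInf₂ fun _ _ => le_iInf fun h =>
    (h.to_eps_zero hε hδ.le).le_lintegral_abs (by linarith [one_le_exp hε]) hΔ

lemma VoptL1_le (hε : 0 ≤ ε) (hδ : 0 < δ) (hΔ : 0 < Δ) :
    VoptL1 ε δ Δ ≤ ENNReal.ofReal (Δ / (4 * δ)) := by
  set a := Δ / (2 * δ) with ha
  have ha_pos : 0 < a := by positivity
  have hprob : IsProbabilityMeasure volume[|Set.Icc (-a) a] :=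
    ProbabilityTheory.cond_isProbabilityMeasure_of_finite (by simp [ha_pos]) (by simp)
  have hDP : SatisfiesDP ε δ Δ volume[|Set.Icc (-a) a] :=
    (satisfiesDP_cond_Icc ha_pos Δ).mono hε (le_of_eq (by rw [ha]; field_simp))
  calc VoptL1 ε δ Δ ≤ ∫⁻ x, ENNReal.ofReal |x| ∂volume[|Set.Icc (-a) a] :=
        iInf₂_le_of_le _ hprob (iInf_le _ hDP)
    _ = ENNReal.ofReal (Δ / (4 * δ)) := by
        rw [lintegral_abs_cond_Icc ha_pos, ha]
        congr 1
        field_simp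
        norm_num

lemma le_liminf_VoptL1 (hδ : 0 < δ) (hΔ : 0 < Δ) :
    ENNReal.ofReal ((1 / (4 * δ) - 1 / 2) * Δ) ≤ liminf (fun ε => VoptL1 ε δ Δ) (𝓝[>] 0) := by
  have hcont : ContinuousAt
      (fun ε => ENNReal.ofReal ((1 / (4 * (δ + (exp ε - 1))) - 1 / 2) * Δ)) 0 := by
    refine ENNReal.continuous_ofReal.continuousAt.comp ?_
    fun_prop (disch := simp [hδ.ne'])
  have htendsto := hcont.tendsto.mono_left (nhdsWithin_le_nhds (s := Set.Ioi 0))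
  rw [exp_zero, sub_self, add_zero] at htendsto
  rw [← htendsto.liminf_eq]
  refine liminf_le_liminf ?_
  filter_upwards [self_mem_nhdsWithin] with ε hε using le_VoptL1 (le_of_lt hε) hδ hΔ

lemma limsup_VoptL1_le (hδ : 0 < δ) (hΔ : 0 < Δ) :
    limsup (fun ε => VoptL1 ε δ Δ) (𝓝[>] 0) ≤ ENNReal.ofReal (Δ / (4 * δ)) := by
  refine limsup_le_of_le (h := ?_)
  filter_upwards [self_mem_nhdsWithin] with ε hε using VoptL1_le (le_of_lt hε) hδ hΔ

end VoptL1

/-- For fixed δ ∈ (0, 1/2) and Δ > 0, as ε → 0⁺ the minimum noise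
amplitude satisfies liminf ≥ (1/(4δ) − 1/2)Δ and limsup ≤ Δ/(4δ); the ratio of the
lower to the upper bound is 1 − 2δ. -/
theorem VoptL1_asymptotics_eps_to_zero
    (δ Δ : ℝ) (hδ0 : 0 < δ) (hδ : δ < 1 / 2) (hΔ : 0 < Δ) :
    Filter.liminf (fun ε : ℝ => VoptL1 ε δ Δ) (nhdsWithin 0 (Set.Ioi 0))
        ≥ ENNReal.ofReal ((1 / (4 * δ) - 1 / 2) * Δ)
      ∧ Filter.limsup (fun ε : ℝ => VoptL1 ε δ Δ) (nhdsWithin 0 (Set.Ioi 0))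
        ≤ ENNReal.ofReal (Δ / (4 * δ))
      ∧ ((1 / (4 * δ) - 1 / 2) * Δ) / (Δ / (4 * δ)) = 1 - 2 * δ := by
  refine ⟨le_liminf_VoptL1 hδ0 hΔ, limsup_VoptL1_le hδ0 hΔ, ?_⟩
  field_simp
  ring
end

section
/- Fix δ ∈ (0, 1/2) and Δ > 0. Then the minimum noise power satisfies liminf_{ε → 0⁺} V_opt^{L2}(ε, δ, Δ) ≥ (Δ²/12)·(1/δ − 1)·(1/δ − 2) and limsup_{ε → 0⁺} V_opt^{L2}(ε, δ, Δ) ≤ Δ²/(12δ²), so the ratio of the limiting lower and upper bounds is at least (1 − δ)(1 − 2δ). -/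
open MeasureTheory Real Filter Topology

/-- The minimum noise power. -/
noncomputable def VoptL2 (ε δ Δ : ℝ) : ENNReal :=
  ⨅ (P : Measure ℝ) (_ : IsProbabilityMeasure P) (_ : SatisfiesDP ε δ Δ P),
    ∫⁻ x : ℝ, ENNReal.ofReal (x ^ 2) ∂P

/-!
Adding to the noise an independent uniform variable on `(-Δ/2, Δ/2]` raises the second moment by
`Δ²/12` and makes the distribution absolutely continuous, with density at `u` equal to `Δ⁻¹` times
the mass of a window of length `Δ` around `u`. Comparing the half-lines `[x, ∞)` and `[x + Δ, ∞)`,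
privacy bounds the mass of such a window by `q = δ + (e^ε - 1)`. Among distributions with density at
most `M` the uniform one has the least second moment, `1 / (12 M²)`, so that
`V + Δ²/12 ≥ Δ²/(12 q²)`. In the other direction, uniform noise on an interval of length `Δ/δ` is
private for every `ε ≥ 0`.
-/

section Convolution

variable {G : Type*} [AddGroup G] [MeasurableSpace G] [MeasurableAdd₂ G] [MeasurableNeg G]
  {μ ρ : Measure G} [SFinite μ] [SFinite ρ] [ρ.IsAddLeftInvariant]

lemma conv_withDensity {f : G → ENNReal} (hf : Measurable f) :
    μ ∗ ρ.withDensity f = ρ.withDensity (fun u => ∫⁻ x, f (-x + u) ∂μ) := by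
  refine Measure.ext_of_lintegral _ fun g hg => ?_
  calc ∫⁻ z, g z ∂(μ ∗ ρ.withDensity f)
      = ∫⁻ x, ∫⁻ y, f y * g (x + y) ∂ρ ∂μ := by
        rw [Measure.lintegral_conv hg]
        refine lintegral_congr fun x => ?_
        rw [lintegral_withDensity_eq_lintegral_mul _ hf (by fun_prop)]
        rfl
    _ = ∫⁻ x, ∫⁻ u, f (-x + u) * g u ∂ρ ∂μ := by
        refine lintegral_congr fun x => ?_
        rw [← lintegral_add_left_eq_self (fun u => f (-x + u) * g u) x]
        simp only [neg_add_cancel_left]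
    _ = ∫⁻ u, ∫⁻ x, f (-x + u) * g u ∂μ ∂ρ := lintegral_lintegral_swap (by fun_prop)
    _ = ∫⁻ u, g u ∂ρ.withDensity (fun u => ∫⁻ x, f (-x + u) ∂μ) := by
        rw [lintegral_withDensity_eq_lintegral_mul _ (by fun_prop) hg]
        refine lintegral_congr fun u => ?_
        rw [lintegral_mul_const _ (by fun_prop)]
        rfl

lemma conv_cond_le_smul {I : Set G} (hI : MeasurableSet I) {c : ENNReal}
    (hc : ∀ u, μ {x | -x + u ∈ I} ≤ c) :
    μ ∗ ProbabilityTheory.cond ρ I ≤ ((ρ I)⁻¹ * c) • ρ := by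
  rw [ProbabilityTheory.cond, ← withDensity_const, ← withDensity_indicator hI,
    conv_withDensity (measurable_const.indicator hI), ← withDensity_const]
  refine withDensity_mono (ae_of_all _ fun u => ?_)
  have hpre : MeasurableSet {x | -x + u ∈ I} := (by fun_prop : Measurable fun x => -x + u) hI
  calc ∫⁻ x, I.indicator (fun _ => (ρ I)⁻¹) (-x + u) ∂μ
      = (ρ I)⁻¹ * μ {x | -x + u ∈ I} := lintegral_indicator_const hpre _
    _ ≤ (ρ I)⁻¹ * c := by gcongr; exact hc u

end Convolution

lemma lintegral_ofReal_sq_sub_sq {r : ℝ} (hr : 0 ≤ r) :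
    ∫⁻ x, ENNReal.ofReal (r ^ 2 - x ^ 2) = ENNReal.ofReal (4 * r ^ 3 / 3) := by
  have hsupp : Function.support (fun x => ENNReal.ofReal (r ^ 2 - x ^ 2)) ⊆ Set.Ioc (-r) r := by
    intro x hx
    obtain ⟨hleft, hright⟩ := abs_lt_of_sq_lt_sq' (by simpa using hx : x ^ 2 < r ^ 2) hr
    exact ⟨hleft, hright.le⟩
  have hcont : Continuous fun x : ℝ => r ^ 2 - x ^ 2 := by fun_prop
  have hnonneg : ∀ᵐ x ∂volume.restrict (Set.Ioc (-r) r), 0 ≤ r ^ 2 - x ^ 2 := by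
    filter_upwards [ae_restrict_mem measurableSet_Ioc] with x hx
    exact sub_nonneg.mpr (sq_le_sq' hx.1.le hx.2)
  have hintegral : ∫ x in (-r)..r, (r ^ 2 - x ^ 2) = 4 * r ^ 3 / 3 := by
    rw [intervalIntegral.integral_sub (by simp) (by simp), intervalIntegral.integral_const,
      integral_pow, smul_eq_mul]
    ring
  rw [← setLIntegral_eq_of_support_subset hsupp,
    ← ofReal_integral_eq_lintegral_ofReal hcont.integrableOn_Ioc hnonneg,
    ← intervalIntegral.integral_of_le (by linarith), hintegral]

lemma ofReal_le_lintegral_sq_of_le_smul_volume {μ : Measure ℝ} [IsProbabilityMeasure μ] {M : ℝ}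
    (hM : 0 < M) (hμ : μ ≤ ENNReal.ofReal M • volume) :
    ENNReal.ofReal (1 / (12 * M ^ 2)) ≤ ∫⁻ x, ENNReal.ofReal (x ^ 2) ∂μ := by
  -- `(-r, r]` carries the uniform distribution of density `M`; integrating the inequality
  -- `r² ≤ (r² - x²)⁺ + x²`, an equality on that interval, gives the optimal constant.
  set r : ℝ := 1 / (2 * M) with hr
  have hr0 : 0 ≤ r := by positivity
  have hsplit : ENNReal.ofReal (r ^ 2)
      ≤ ENNReal.ofReal (2 * r ^ 2 / 3) + ∫⁻ x, ENNReal.ofReal (x ^ 2) ∂μ :=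
    calc ENNReal.ofReal (r ^ 2)
        = ∫⁻ _, ENNReal.ofReal (r ^ 2) ∂μ := by simp
      _ ≤ ∫⁻ x, (ENNReal.ofReal (r ^ 2 - x ^ 2) + ENNReal.ofReal (x ^ 2)) ∂μ :=
          lintegral_mono fun x =>
            (congrArg ENNReal.ofReal (sub_add_cancel (r ^ 2) (x ^ 2))).ge.trans
              ENNReal.ofReal_add_le
      _ = ∫⁻ x, ENNReal.ofReal (r ^ 2 - x ^ 2) ∂μ + ∫⁻ x, ENNReal.ofReal (x ^ 2) ∂μ :=
          lintegral_add_left (by fun_prop) _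
      _ ≤ ENNReal.ofReal (2 * r ^ 2 / 3) + ∫⁻ x, ENNReal.ofReal (x ^ 2) ∂μ := by
          gcongr
          refine (lintegral_mono' hμ le_rfl).trans_eq ?_
          rw [lintegral_smul_measure, lintegral_ofReal_sq_sub_sq hr0, smul_eq_mul,
            ← ENNReal.ofReal_mul hM.le, hr]
          congr 1
          field_simp
          norm_num
  calc ENNReal.ofReal (1 / (12 * M ^ 2))
      = ENNReal.ofReal (r ^ 2) - ENNReal.ofReal (2 * r ^ 2 / 3) := by
        rw [← ENNReal.ofReal_sub _ (by positivity), hr]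
        congr 1
        field_simp
        norm_num
    _ ≤ ∫⁻ x, ENNReal.ofReal (x ^ 2) ∂μ := tsub_le_iff_left.mpr hsplit

lemma measure_inter_le_add_diff {G : Type*} [AddGroup G] [MeasurableSpace G] [MeasurableAdd G]
    (ρ : Measure G) [ρ.IsAddRightInvariant] (S I : Set G) (d : G) :
    ρ (I ∩ S) ≤ ρ (I ∩ (fun s => s + d) '' S) + ρ (I \ (fun s => s + d) ⁻¹' I) := by
  rw [← measure_preimage_add_right ρ d (I ∩ (fun s => s + d) '' S)]
  refine (measure_mono fun x hx => ?_).trans (measure_union_le _ _)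
  by_cases hxd : x + d ∈ I
  · exact Or.inl ⟨hxd, x, hx.2, rfl⟩
  · exact Or.inr ⟨hx.1, hxd⟩

lemma volume_Ioc_neg_self (r : ℝ) : volume (Set.Ioc (-r) r) = ENNReal.ofReal (2 * r) := by
  rw [Real.volume_Ioc, sub_neg_eq_add, two_mul]

lemma volume_Ioc_diff_preimage_add_le (a b d : ℝ) :
    volume (Set.Ioc a b \ (fun s => s + d) ⁻¹' Set.Ioc a b) ≤ ENNReal.ofReal |d| := by
  rcases le_total 0 d with hd | hd
  · have hsub : Set.Ioc a b \ (fun s => s + d) ⁻¹' Set.Ioc a b ⊆ Set.Ioc (b - d) b :=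
      fun x ⟨hx, hxd⟩ => ⟨by by_contra! h; exact hxd ⟨by linarith [hx.1], by linarith⟩, hx.2⟩
    simpa [abs_of_nonneg hd] using measure_mono (μ := volume) hsub
  · have hsub : Set.Ioc a b \ (fun s => s + d) ⁻¹' Set.Ioc a b ⊆ Set.Ioc a (a - d) :=
      fun x ⟨hx, hxd⟩ => ⟨hx.1, by by_contra! h; exact hxd ⟨by linarith, by linarith [hx.2]⟩⟩
    simpa [abs_of_nonpos hd] using measure_mono (μ := volume) hsub

/-- The uniform distribution on the interval `(-r, r]` (the zero measure when `r ≤ 0`); it serves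
both as the noise of the upper bound and as the smoothing kernel of the lower bound. -/
noncomputable def uniformNoise (r : ℝ) : Measure ℝ :=
  ProbabilityTheory.cond volume (Set.Ioc (-r) r)

namespace uniformNoise

variable {r : ℝ}

lemma isProbabilityMeasure (hr : 0 < r) : IsProbabilityMeasure (uniformNoise r) :=
  ProbabilityTheory.cond_isProbabilityMeasure_of_finite (by simp [hr]) (by simp)

lemma lintegral_add_sq (hr : 0 < r) (x : ℝ) :
    ∫⁻ y, ENNReal.ofReal ((x + y) ^ 2) ∂uniformNoise r = ENNReal.ofReal (x ^ 2 + r ^ 2 / 3) := by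
  have hcont : Continuous fun y : ℝ => (x + y) ^ 2 := by fun_prop
  rw [uniformNoise, ProbabilityTheory.cond, lintegral_smul_measure, volume_Ioc_neg_self,
    ← ofReal_integral_eq_lintegral_ofReal hcont.integrableOn_Ioc
      (ae_of_all _ fun y => sq_nonneg (x + y)),
    ← intervalIntegral.integral_of_le (by linarith),
    intervalIntegral.integral_comp_add_left (fun y => y ^ 2), integral_pow, smul_eq_mul,
    ← ENNReal.ofReal_inv_of_pos (by positivity), ← ENNReal.ofReal_mul (by positivity)]
  congr 1
  push_cast
  field_simp
  ring

lemma lintegral_sq_conv (hr : 0 < r) (P : Measure ℝ) [IsProbabilityMeasure P] :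
    ∫⁻ z, ENNReal.ofReal (z ^ 2) ∂(P ∗ uniformNoise r)
      = ∫⁻ x, ENNReal.ofReal (x ^ 2) ∂P + ENNReal.ofReal (r ^ 2 / 3) := by
  have := isProbabilityMeasure hr
  rw [Measure.lintegral_conv (by fun_prop)]
  simp only [lintegral_add_sq hr, ENNReal.ofReal_add (sq_nonneg _) (by positivity : 0 ≤ r ^ 2 / 3)]
  rw [lintegral_add_right _ measurable_const, lintegral_const, measure_univ, mul_one]

lemma satisfiesDP {ε δ Δ : ℝ} (hε : 0 ≤ ε) (hr : 0 < r) (hΔ : Δ ≤ 2 * r * δ) :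
    SatisfiesDP ε δ Δ (uniformNoise r) := by
  intro d hd S _
  have hescape : volume (Set.Ioc (-r) r \ (fun s => s + d) ⁻¹' Set.Ioc (-r) r)
      ≤ ENNReal.ofReal (2 * r) * ENNReal.ofReal δ := by
    rw [← ENNReal.ofReal_mul (by positivity)]
    exact (volume_Ioc_diff_preimage_add_le _ _ d).trans
      (ENNReal.ofReal_le_ofReal (hd.trans hΔ))
  have hshift : uniformNoise r S
      ≤ uniformNoise r ((fun s => s + d) '' S) + ENNReal.ofReal δ := by
    simp only [uniformNoise, ProbabilityTheory.cond_apply measurableSet_Ioc, volume_Ioc_neg_self]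
    refine (mul_le_mul_right (measure_inter_le_add_diff volume S _ d) _).trans ?_
    rw [mul_add]
    gcongr
    exact (ENNReal.inv_mul_le_iff (by simpa using hr) ENNReal.ofReal_ne_top).mpr hescape
  refine hshift.trans ?_
  gcongr
  exact le_mul_of_one_le_left zero_le (ENNReal.one_le_ofReal.mpr (Real.one_le_exp hε))

end uniformNoise

namespace SatisfiesDP

variable {ε δ Δ : ℝ} {P : Measure ℝ} [IsProbabilityMeasure P]

lemma measure_Ico_le (h : SatisfiesDP ε δ Δ P) (hε : 0 ≤ ε) (hδ : 0 ≤ δ) (hΔ : 0 ≤ Δ) (x : ℝ) :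
    P (Set.Ico x (x + Δ)) ≤ ENNReal.ofReal (δ + (Real.exp ε - 1)) := by
  have hdisj : Disjoint (Set.Ico x (x + Δ)) (Set.Ici (x + Δ)) :=
    (Set.Iio_disjoint_Ici le_rfl).mono_left Set.Ico_subset_Iio_self
  have hexp : 0 ≤ Real.exp ε - 1 := sub_nonneg.mpr (Real.one_le_exp hε)
  have hshift := h Δ (abs_of_nonneg hΔ).le (Set.Ici x) measurableSet_Ici
  rw [Set.image_add_const_Ici, ← Set.Ico_union_Ici_eq_Ici (le_add_of_nonneg_right hΔ),
    measure_union hdisj measurableSet_Ici] at hshift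
  refine ENNReal.le_of_add_le_add_right (measure_ne_top P (Set.Ici (x + Δ))) (hshift.trans ?_)
  calc ENNReal.ofReal (Real.exp ε) * P (Set.Ici (x + Δ)) + ENNReal.ofReal δ
      = ENNReal.ofReal (Real.exp ε - 1) * P (Set.Ici (x + Δ)) + P (Set.Ici (x + Δ))
          + ENNReal.ofReal δ := by
        rw [← add_one_mul, ← ENNReal.ofReal_one, ← ENNReal.ofReal_add hexp zero_le_one,
          sub_add_cancel]
    _ ≤ ENNReal.ofReal (Real.exp ε - 1) * 1 + P (Set.Ici (x + Δ)) + ENNReal.ofReal δ := by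
        gcongr
        exact prob_le_one
    _ = ENNReal.ofReal (δ + (Real.exp ε - 1)) + P (Set.Ici (x + Δ)) := by
        rw [ENNReal.ofReal_add hδ hexp, mul_one]
        ring

end SatisfiesDP

lemma ofReal_le_lintegral_sq_add_of_measure_Ico_le {P : Measure ℝ} [IsProbabilityMeasure P]
    {Δ q : ℝ} (hΔ : 0 < Δ) (hq : 0 < q)
    (h : ∀ x, P (Set.Ico x (x + Δ)) ≤ ENNReal.ofReal q) :
    ENNReal.ofReal (Δ ^ 2 / (12 * q ^ 2))
      ≤ ∫⁻ x, ENNReal.ofReal (x ^ 2) ∂P + ENNReal.ofReal (Δ ^ 2 / 12) := by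
  have hr : 0 < Δ / 2 := half_pos hΔ
  have := uniformNoise.isProbabilityMeasure hr
  have hwindow (u : ℝ) : {x | -x + u ∈ Set.Ioc (-(Δ / 2)) (Δ / 2)}
      = Set.Ico (u - Δ / 2) (u - Δ / 2 + Δ) := by
    ext x
    simp only [Set.mem_ofPred_eq, Set.mem_Ioc, Set.mem_Ico]
    constructor <;> rintro ⟨h₁, h₂⟩ <;> constructor <;> linarith
  have hdensity : P ∗ uniformNoise (Δ / 2) ≤ ENNReal.ofReal (q / Δ) • volume := by
    refine (conv_cond_le_smul measurableSet_Ioc fun u => hwindow u ▸ h (u - Δ / 2)).trans_eq ?_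
    rw [volume_Ioc_neg_self, mul_div_cancel₀ _ two_ne_zero,
      ← ENNReal.ofReal_inv_of_pos hΔ, ← ENNReal.ofReal_mul (by positivity), inv_mul_eq_div]
  calc ENNReal.ofReal (Δ ^ 2 / (12 * q ^ 2))
      = ENNReal.ofReal (1 / (12 * (q / Δ) ^ 2)) := by congr 1; field_simp
    _ ≤ ∫⁻ z, ENNReal.ofReal (z ^ 2) ∂(P ∗ uniformNoise (Δ / 2)) :=
        ofReal_le_lintegral_sq_of_le_smul_volume (by positivity) hdensity
    _ = ∫⁻ x, ENNReal.ofReal (x ^ 2) ∂P + ENNReal.ofReal (Δ ^ 2 / 12) := by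
        rw [uniformNoise.lintegral_sq_conv hr]
        congr 2
        ring

namespace VoptL2

variable {ε δ Δ : ℝ}

lemma le_ofReal_sq_div (hε : 0 ≤ ε) (hδ : 0 < δ) (hΔ : 0 < Δ) :
    VoptL2 ε δ Δ ≤ ENNReal.ofReal (Δ ^ 2 / (12 * δ ^ 2)) := by
  set r : ℝ := Δ / (2 * δ) with hr
  have hr0 : 0 < r := by positivity
  have hwidth : 2 * r * δ = Δ := by rw [hr]; field_simp
  have hDP : SatisfiesDP ε δ Δ (uniformNoise r) := uniformNoise.satisfiesDP hε hr0 hwidth.ge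
  calc VoptL2 ε δ Δ
      ≤ ∫⁻ x, ENNReal.ofReal (x ^ 2) ∂uniformNoise r :=
        iInf₂_le_of_le _ (uniformNoise.isProbabilityMeasure hr0) (iInf_le _ hDP)
    _ = ENNReal.ofReal (Δ ^ 2 / (12 * δ ^ 2)) := by
        have hmoment := uniformNoise.lintegral_add_sq hr0 0
        simp only [zero_add] at hmoment
        rw [hmoment, hr]
        congr 1
        field_simp
        ring

lemma ofReal_sq_div_le_add (hε : 0 ≤ ε) (hδ : 0 < δ) (hΔ : 0 < Δ) :
    ENNReal.ofReal (Δ ^ 2 / (12 * (δ + (Real.exp ε - 1)) ^ 2))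
      ≤ VoptL2 ε δ Δ + ENNReal.ofReal (Δ ^ 2 / 12) := by
  have hq : 0 < δ + (Real.exp ε - 1) := by linarith [Real.one_le_exp hε]
  refine tsub_le_iff_right.mp (le_iInf fun P => le_iInf fun _ => le_iInf fun hDP => ?_)
  exact tsub_le_iff_right.mpr <|
    ofReal_le_lintegral_sq_add_of_measure_Ico_le hΔ hq (hDP.measure_Ico_le hε hδ.le hΔ.le)

end VoptL2

theorem VoptL2_asymptotics_eps_to_zero_general {δ Δ : ℝ} (hδ : 0 < δ) (hΔ : 0 < Δ) :
    ENNReal.ofReal (Δ ^ 2 / (12 * δ ^ 2))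
        ≤ liminf (fun ε => VoptL2 ε δ Δ) (𝓝[>] 0) + ENNReal.ofReal (Δ ^ 2 / 12)
      ∧ limsup (fun ε => VoptL2 ε δ Δ) (𝓝[>] 0) ≤ ENNReal.ofReal (Δ ^ 2 / (12 * δ ^ 2)) := by
  constructor
  · have hcont : ContinuousAt (fun ε => Δ ^ 2 / (12 * (δ + (Real.exp ε - 1)) ^ 2)) 0 := by
      refine ContinuousAt.div (by fun_prop) (by fun_prop) ?_
      simp [hδ.ne']
    have hlim : Tendsto
        (fun ε => ENNReal.ofReal (Δ ^ 2 / (12 * (δ + (Real.exp ε - 1)) ^ 2))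
          - ENNReal.ofReal (Δ ^ 2 / 12)) (𝓝[>] 0)
        (𝓝 (ENNReal.ofReal (Δ ^ 2 / (12 * δ ^ 2)) - ENNReal.ofReal (Δ ^ 2 / 12))) := by
      refine ENNReal.Tendsto.sub ?_ tendsto_const_nhds (Or.inr ENNReal.ofReal_ne_top)
      simpa using (ENNReal.tendsto_ofReal hcont.tendsto).mono_left nhdsWithin_le_nhds
    rw [← tsub_le_iff_right, ← hlim.liminf_eq]
    refine liminf_le_liminf ?_
    filter_upwards [self_mem_nhdsWithin] with ε hε
    exact tsub_le_iff_right.mpr (VoptL2.ofReal_sq_div_le_add (le_of_lt hε) hδ hΔ)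
  · refine limsup_le_of_le (by isBoundedDefault) ?_
    filter_upwards [self_mem_nhdsWithin] with ε hε
    exact VoptL2.le_ofReal_sq_div (le_of_lt hε) hδ hΔ

lemma sq_div_mul_sub_mul_sub_le {δ : ℝ} (Δ : ℝ) (hδ0 : 0 < δ) (hδ1 : δ ≤ 1) :
    Δ ^ 2 / 12 * (1 / δ - 1) * (1 / δ - 2) ≤ Δ ^ 2 / (12 * δ ^ 2) - Δ ^ 2 / 12 := by
  have hdiff : Δ ^ 2 / (12 * δ ^ 2) - Δ ^ 2 / 12 - Δ ^ 2 / 12 * (1 / δ - 1) * (1 / δ - 2)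
      = Δ ^ 2 * (1 - δ) / (4 * δ) := by field_simp; ring
  have hnonneg : 0 ≤ Δ ^ 2 * (1 - δ) / (4 * δ) :=
    div_nonneg (mul_nonneg (sq_nonneg Δ) (sub_nonneg.mpr hδ1)) (by positivity)
  linarith

/-- For fixed δ ∈ (0, 1/2) and Δ > 0, as ε → 0⁺ the minimum noise
power satisfies liminf ≥ (Δ²/12)(1/δ − 1)(1/δ − 2) and limsup ≤ Δ²/(12δ²); the
ratio of the limiting lower and upper bounds is (1 − δ)(1 − 2δ). -/
theorem VoptL2_asymptotics_eps_to_zero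
    (δ Δ : ℝ) (hδ0 : 0 < δ) (hδ : δ < 1 / 2) (hΔ : 0 < Δ) :
    Filter.liminf (fun ε : ℝ => VoptL2 ε δ Δ) (nhdsWithin 0 (Set.Ioi 0))
        ≥ ENNReal.ofReal ((Δ ^ 2 / 12) * (1 / δ - 1) * (1 / δ - 2))
      ∧ Filter.limsup (fun ε : ℝ => VoptL2 ε δ Δ) (nhdsWithin 0 (Set.Ioi 0))
        ≤ ENNReal.ofReal (Δ ^ 2 / (12 * δ ^ 2))
      ∧ ((Δ ^ 2 / 12) * (1 / δ - 1) * (1 / δ - 2)) / (Δ ^ 2 / (12 * δ ^ 2))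
        = (1 - δ) * (1 - 2 * δ) := by
  obtain ⟨hlower, hupper⟩ := VoptL2_asymptotics_eps_to_zero_general hδ0 hΔ
  have hconst := sq_div_mul_sub_mul_sub_le Δ hδ0 (by linarith : δ ≤ 1)
  rw [← tsub_le_iff_right, ← ENNReal.ofReal_sub _ (by positivity)] at hlower
  exact ⟨(ENNReal.ofReal_le_ofReal hconst).trans hlower, hupper, by field_simp⟩
end
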